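/- With p, q ∈ ℚ[X] as in the context (the Belyi map of degree 56 for the normalizer of PSL(3,4) in S_56), the polynomial F = p − t·q ∈ K[X] has degree 56, is irreducible over K = ℚ(t), and its Galois group Polynomial.Gal F (the Galois group of the splitting field of F over K) has cardinality 80640, the order of PSL(3,4):2^2. -/

import Mathlib

open Polynomial

noncomputable section

def p : Polynomial ℚ :=
    (X ^ 2 - 6 * X - 1) ^ 2 * (3 * X ^ 4 - 468 * X ^ 3 - 258 * X ^ 2 - 60 * X - 5) * (3 * X ^
    4 + 36 * X ^ 3 + 54 * X ^ 2 + 60 * X + 19) ^ 4 * (3 * X ^ 8 - 96 * X ^ 7 - 12 * X ^ 6 +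
    432 * X ^ 5 + 1498 * X ^ 4 - 320 * X ^ 3 - 348 * X ^ 2 - 80 * X - 5) ^ 4

def r : Polynomial ℚ :=
    -12500 * (X ^ 2 + 2 * X + 3) ^ 2 * (3 * X ^ 2 + 6 * X + 1) ^ 8 * (3 * X ^ 4 - 12 * X ^ 3 +
    38 * X ^ 2 + 12 * X + 3) ^ 8

def q : Polynomial ℚ := p - r

/-- `F = p − t·q ∈ K[X]` where `K = ℚ(t)` and `t = RatFunc.X`. -/
def F : Polynomial (RatFunc ℚ) :=
  p.map (algebraMap ℚ (RatFunc ℚ)) - Polynomial.C RatFunc.X * q.map (algebraMap ℚ (RatFunc ℚ))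

end

/-!
The substitution `x ↦ x / 3` and a Möbius change of `t` turn the roots of `F` into the roots of a
monic polynomial `P + u R` over `ℤ[u]`, with `P` and `R` coprime. Being linear in `u`, it is
irreducible by Gauss's lemma.

The polynomial `P(x) R(y) - R(x) P(y)` has a factor `A(x, y)` of degree `10` in each variable, so
`A = 0` defines a `10`-regular graph on the `56` roots which the Galois group `G` preserves.
Reduction modulo `2137` at `u = 1198`, where `P + u R` splits into distinct linear factors,
identifies this graph with the Gewirtz graph.

An automorphism of the Gewirtz graph that fixes a vertex and three suitable neighbours of it leaves
only two possible images for a certain further vertex, and it is the identity if it fixes that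
vertex too. Hence `|G| ≤ 56 · 10 · 9 · 8 · 2`.

Conversely, `G` is transitive on the roots. Frobenius elements at `7` and `u = 1`, at `7` and
`u = 3`, and at `13` and `u = 5` fix a root and act on its `10` neighbours without fixed points,
with cycle type `1 + 3 + 6`, and with cycle type `1 + 1 + 8` respectively. Conjugates of them
generate a triply transitive group on the neighbours of a root, and the cube of the second one is a
nontrivial element fixing more than three neighbours. Hence `|G| ≥ 56 · 10 · 9 · 8 · 2`.
-/

namespace BelyiDeg56

/-! ### Kronecker substitution and coefficient lists -/

section Kronecker

variable {R : Type*} [Ring R] (v : RingSeminorm R)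

lemma sum_seminorm_coeff_add_le (f g : R[X]) :
    ((f + g).sum fun _ a => v a) ≤ (f.sum fun _ a => v a) + g.sum fun _ a => v a := by
  have hv : ∀ _ : ℕ, v 0 = 0 := fun _ => map_zero v
  set n := max f.natDegree g.natDegree + 1
  rw [sum_over_range' (f + g) hv n (Nat.lt_succ_of_le (natDegree_add_le f g)),
    sum_over_range' f hv n (Nat.lt_succ_of_le (le_max_left _ _)),
    sum_over_range' g hv n (Nat.lt_succ_of_le (le_max_right _ _)), ← Finset.sum_add_distrib]
  exact Finset.sum_le_sum fun i _ => by rw [coeff_add]; exact map_add_le_add v _ _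

lemma sum_seminorm_coeff_mul_le (f g : R[X]) :
    ((f * g).sum fun _ a => v a) ≤ (f.sum fun _ a => v a) * g.sum fun _ a => v a := by
  have sum_le {ι : Type} (s : Finset ι) (h : ι → R[X]) :
      ((∑ i ∈ s, h i).sum fun _ a => v a) ≤ ∑ i ∈ s, (h i).sum fun _ a => v a :=
    Finset.le_sum_of_subadditive (fun f : R[X] => f.sum fun _ a => v a)
      (sum_zero_index _).le (sum_seminorm_coeff_add_le v) s h
  rw [mul_eq_sum_sum, sum_def f, Finset.sum_mul]
  refine (sum_le _ _).trans (Finset.sum_le_sum fun i _ => ?_)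
  rw [sum_def g, sum_def g, Finset.mul_sum]
  refine (sum_le _ _).trans (Finset.sum_le_sum fun j _ => ?_)
  rw [sum_monomial_index _ _ (map_zero v)]
  exact map_mul_le_mul v _ _

/-- The `ℓ¹` seminorm on `R[X]`: the sum of the values of `v` at the coefficients. It bounds the
coefficients of a polynomial identity that is only checked after Kronecker substitution. -/
noncomputable def l1Seminorm : RingSeminorm R[X] where
  toFun f := f.sum fun _ a => v a
  map_zero' := sum_zero_index _
  add_le' := sum_seminorm_coeff_add_le v
  neg' f := by simp only [sum_def, support_neg, coeff_neg, map_neg_eq_map]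
  mul_le' := sum_seminorm_coeff_mul_le v

lemma l1Seminorm_C (a : R) : l1Seminorm v (C a) = v a := sum_C_index (map_zero v)

lemma l1Seminorm_X : l1Seminorm v X = v 1 := sum_monomial_index _ _ (map_zero v)

lemma seminorm_coeff_le_l1Seminorm (f : R[X]) (n : ℕ) : v (f.coeff n) ≤ l1Seminorm v f := by
  by_cases hn : n ∈ f.support
  · exact Finset.single_le_sum (f := fun i => v (f.coeff i)) (fun i _ => apply_nonneg v _) hn
  · rw [notMem_support_iff.mp hn, map_zero]
    exact apply_nonneg (l1Seminorm v) f

lemma l1Seminorm_map_C_le (f : R[X]) : l1Seminorm (l1Seminorm v) (f.map C) ≤ l1Seminorm v f := by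
  have hsub : (f.map C).support ⊆ f.support := support_map_subset C f
  refine (Finset.sum_le_sum_of_subset_of_nonneg hsub fun _ _ _ => apply_nonneg _ _).trans_eq ?_
  simp only [coeff_map, l1Seminorm_C]
  rfl

/-- The `ℓ¹` norm of an integer polynomial. -/
noncomputable abbrev intL1Norm : RingSeminorm ℤ[X] := l1Seminorm (normRingSeminorm ℤ)

lemma eq_zero_of_eval_eq_zero_of_abs_coeff_lt {z : ℤ} {f : ℤ[X]} (hcoeff : ∀ n, |f.coeff n| < z)
    (hz : f.eval z = 0) : f = 0 := by
  have hz0 : 0 < z := (abs_nonneg _).trans_lt (hcoeff 0)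
  have step (g : ℤ[X]) (hg : |g.coeff 0| < z) (hgz : g.eval z = 0) :
      g.coeff 0 = 0 ∧ g.divX.eval z = 0 := by
    have hsplit : g.divX.eval z * z + g.coeff 0 = 0 := by
      rw [← hgz]; conv_rhs => rw [← divX_mul_X_add g]
      simp
    have hg0 : g.coeff 0 = 0 :=
      Int.eq_zero_of_abs_lt_dvd (Dvd.intro_left (-g.divX.eval z) (by linarith)) hg
    rw [hg0, add_zero, mul_eq_zero_iff_right hz0.ne'] at hsplit
    exact ⟨hg0, hsplit⟩
  ext n
  induction n generalizing f with
  | zero => exact (step f (hcoeff 0) hz).1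
  | succ n ih =>
    rw [coeff_zero, ← coeff_divX]
    exact ih (fun m => by rw [coeff_divX]; exact hcoeff _) (step f (hcoeff 0) hz).2

lemma eq_zero_of_map_eval_eq_zero {z : ℤ} {f : ℤ[X][X]} (hf : l1Seminorm intL1Norm f < z)
    (hz : f.map (evalRingHom z) = 0) : f = 0 := by
  ext1 n
  refine eq_zero_of_eval_eq_zero_of_abs_coeff_lt (fun m => ?_) (by simpa using congr(($hz).coeff n))
  have hm := (seminorm_coeff_le_l1Seminorm _ (f.coeff n) m).trans
    (seminorm_coeff_le_l1Seminorm intL1Norm f n)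
  have : ‖(f.coeff n).coeff m‖ < z := hm.trans_lt hf
  rwa [Int.norm_eq_abs, ← Int.cast_abs, Int.cast_lt] at this

end Kronecker

section CoefficientLists

/-- The polynomial with the given list of coefficients, constant term first. A bivariate polynomial
is the list of its coefficients with respect to the outer variable, each of them again a list. -/
noncomputable def toPoly {R : Type*} [Semiring R] : List R → R[X]
  | [] => 0
  | a :: l => C a + X * toPoly l

/-- `a + c * b` on coefficient lists. -/
def addMul (c : ℤ) : List ℤ → List ℤ → List ℤ
  | a, [] => a
  | [], b :: bs => (c * b) :: addMul c [] bs
  | a :: as, b :: bs => (a + c * b) :: addMul c as bs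

/-- `r + a * b` on coefficient lists. -/
def mulAdd (r : List ℤ) : List ℤ → List ℤ → List ℤ
  | [], _ => r
  | a :: as, b => (addMul a r b).headD 0 :: mulAdd (addMul a r b).tail as b

/-- The product of coefficient lists. -/
def listMul (a b : List ℤ) : List ℤ := mulAdd [] a b

/-- Powers of a coefficient list. -/
def listPow (a : List ℤ) : ℕ → List ℤ
  | 0 => [1]
  | n + 1 => listMul (listPow a n) a

/-- The coefficient list of `n * f + X * f'`. -/
def scaledDeriv : List ℤ → ℤ → List ℤ
  | [], _ => []
  | a :: as, n => (n * a) :: scaledDeriv as (n + 1)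

/-- The derivative of a coefficient list. -/
def listDeriv (a : List ℤ) : List ℤ := scaledDeriv a.tail 1

/-- Evaluation of a coefficient list by Horner's rule. -/
def listEval (y : ℤ) : List ℤ → ℤ
  | [] => 0
  | a :: as => a + y * listEval y as

@[simp] lemma toPoly_nil {R : Type*} [Semiring R] : toPoly ([] : List R) = 0 := rfl

@[simp] lemma toPoly_cons {R : Type*} [Semiring R] (a : R) (l : List R) :
    toPoly (a :: l) = C a + X * toPoly l := rfl

lemma toPoly_eq_C_headD_add {R : Type*} [Semiring R] (l : List R) :
    toPoly l = C (l.headD 0) + X * toPoly l.tail := by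
  cases l <;> simp

lemma coeff_toPoly {R : Type*} [Semiring R] (l : List R) (n : ℕ) :
    (toPoly l).coeff n = l.getD n 0 := by
  induction l generalizing n with
  | nil => simp
  | cons a l ih => cases n <;> simp [coeff_C, ih]

lemma natDegree_toPoly_le {R : Type*} [Semiring R] {l : List R} {n : ℕ} (hl : l.length ≤ n + 1) :
    (toPoly l).natDegree ≤ n :=
  natDegree_le_iff_coeff_eq_zero.mpr fun m hm => by
    rw [coeff_toPoly, List.getD_eq_default _ _ (by lia)]

lemma monic_toPoly {R : Type*} [Semiring R] {l : List R} {n : ℕ} (hl : l.length = n + 1)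
    (hn : l.getD n 0 = 1) : (toPoly l).Monic :=
  monic_of_natDegree_le_of_coeff_eq_one n (natDegree_toPoly_le hl.le) (by rw [coeff_toPoly, hn])

lemma toPoly_addMul (c : ℤ) (a b : List ℤ) :
    toPoly (addMul c a b) = toPoly a + C c * toPoly b := by
  induction b generalizing a with
  | nil => cases a <;> simp [addMul]
  | cons b bs ih =>
    cases a <;> simp only [addMul, toPoly_cons, toPoly_nil, ih, C_add, C_mul] <;> ring

lemma toPoly_mulAdd (r a b : List ℤ) :
    toPoly (mulAdd r a b) = toPoly r + toPoly a * toPoly b := by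
  induction a generalizing r with
  | nil => simp [mulAdd]
  | cons a as ih =>
    have hhead := toPoly_addMul a r b
    rw [toPoly_eq_C_headD_add (addMul a r b)] at hhead
    rw [mulAdd, toPoly_cons, toPoly_cons, ih]
    linear_combination hhead

lemma toPoly_listMul (a b : List ℤ) : toPoly (listMul a b) = toPoly a * toPoly b := by
  rw [listMul, toPoly_mulAdd, toPoly_nil, zero_add]

lemma toPoly_listPow (a : List ℤ) (n : ℕ) : toPoly (listPow a n) = toPoly a ^ n := by
  induction n with
  | zero => simp [listPow]
  | succ n ih => rw [listPow, toPoly_listMul, ih, pow_succ]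

lemma toPoly_scaledDeriv (l : List ℤ) (n : ℤ) :
    toPoly (scaledDeriv l n) = C n * toPoly l + X * derivative (toPoly l) := by
  induction l generalizing n with
  | nil => simp [scaledDeriv]
  | cons a l ih =>
    simp only [scaledDeriv, toPoly_cons, ih, derivative_add, derivative_mul, derivative_X,
      derivative_C, C_mul, C_add, C_1]
    ring

lemma toPoly_listDeriv (l : List ℤ) : toPoly (listDeriv l) = derivative (toPoly l) := by
  rw [listDeriv, toPoly_scaledDeriv, toPoly_eq_C_headD_add l]
  simp

lemma eval_toPoly (y : ℤ) (l : List ℤ) : (toPoly l).eval y = listEval y l := by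
  induction l with
  | nil => simp [listEval]
  | cons a l ih => simp [listEval, ih]

lemma toPoly_map_listEval (y : ℤ) (l : List (List ℤ)) :
    toPoly (l.map (listEval y)) = (toPoly (l.map toPoly)).map (evalRingHom y) := by
  induction l with
  | nil => simp
  | cons a l ih => simp [ih, eval_toPoly]

lemma l1Seminorm_toPoly_le {R : Type*} [Ring R] {v : RingSeminorm R} (hv : v 1 ≤ 1) (l : List R) :
    l1Seminorm v (toPoly l) ≤ (l.map v).sum := by
  induction l with
  | nil => simp
  | cons a l ih =>
    calc l1Seminorm v (C a + X * toPoly l)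
        ≤ l1Seminorm v (C a) + l1Seminorm v X * l1Seminorm v (toPoly l) :=
          (map_add_le_add _ _ _).trans (by gcongr; exact map_mul_le_mul _ _ _)
      _ ≤ v a + 1 * (l.map v).sum := by
          rw [l1Seminorm_C, l1Seminorm_X]
          gcongr
      _ = ((a :: l).map v).sum := by simp

/-- The sum of the absolute values of the entries. -/
def absSum (l : List ℤ) : ℕ := (l.map Int.natAbs).sum

lemma intL1Norm_toPoly_le (l : List ℤ) : intL1Norm (toPoly l) ≤ absSum l := by
  refine (l1Seminorm_toPoly_le (norm_one (α := ℤ)).le l).trans_eq ?_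
  rw [absSum, Nat.cast_list_sum, List.map_map]
  congr 2
  ext a
  simpa using! Int.norm_eq_abs a

lemma l1Seminorm_intL1Norm_toPoly_le (l : List (List ℤ)) :
    l1Seminorm intL1Norm (toPoly (l.map toPoly)) ≤ (l.map absSum).sum := by
  have hone : intL1Norm 1 ≤ 1 :=
    (l1Seminorm_C (normRingSeminorm ℤ) 1).trans_le (norm_one (α := ℤ)).le
  refine (l1Seminorm_toPoly_le hone _).trans ?_
  rw [Nat.cast_list_sum, List.map_map, List.map_map]
  exact List.sum_le_sum fun a _ => intL1Norm_toPoly_le a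

end CoefficientLists

section ModularArithmetic

/-- `a + X * l` on coefficient lists, keeping lists free of leading zeros. -/
def trimCons (a : ℤ) : List ℤ → List ℤ
  | [] => if a = 0 then [] else [a]
  | b :: l => a :: b :: l

/-- Reduction of the coefficients modulo `ℓ`. -/
def listMod (ℓ : ℤ) (l : List ℤ) : List ℤ := l.foldr (fun a r => trimCons (a % ℓ) r) []

/-- The remainder of `a + X * r` modulo `ℓ` and the monic `g`, for `r` of degree below `deg g`. -/
def remStep (ℓ : ℤ) (g : List ℤ) (a : ℤ) (r : List ℤ) : List ℤ :=
  if r.length + 1 < g.length then trimCons (a % ℓ) r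
  else listMod ℓ (addMul (-r.getLastD a) (a :: r) g)

/-- The remainder of a coefficient list modulo `ℓ` and the monic `g`. -/
def listRem (ℓ : ℤ) (g a : List ℤ) : List ℤ := a.foldr (remStep ℓ g) []

/-- Powers modulo `ℓ` and `g`. -/
def powRem (ℓ : ℤ) (g a : List ℤ) : ℕ → List ℤ
  | 0 => [1]
  | n + 1 => listRem ℓ g (listMul (powRem ℓ g a n) a)

/-- `X ^ ℓ ^ n` modulo `ℓ` and `g`. -/
def frobRem (ℓ : ℕ) (g : List ℤ) : ℕ → List ℤ
  | 0 => [0, 1]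
  | n + 1 => powRem ℓ g (frobRem ℓ g n) ℓ

lemma toPoly_trimCons (a : ℤ) (l : List ℤ) : toPoly (trimCons a l) = C a + X * toPoly l := by
  cases l with
  | nil =>
    rw [trimCons]
    split_ifs with ha <;> simp [ha]
  | cons b l => simp [trimCons]

variable {S : Type*} [CommRing S] {ℓ : ℕ}

lemma intCast_emod_of_cast_eq_zero (hℓ : (ℓ : S) = 0) (a : ℤ) : ((a % ℓ : ℤ) : S) = a := by
  rw [Int.emod_def]
  simp [hℓ]

variable [Algebra ℤ S]

lemma aeval_listMod (hℓ : (ℓ : S) = 0) (l : List ℤ) (x : S) :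
    aeval x (toPoly (listMod ℓ l)) = aeval x (toPoly l) := by
  induction l with
  | nil => rfl
  | cons a l ih =>
    rw [listMod] at ih
    rw [listMod, List.foldr_cons, toPoly_trimCons, toPoly_cons]
    simp [ih, intCast_emod_of_cast_eq_zero hℓ]

variable {g : List ℤ} {x : S}

lemma aeval_listRem (hℓ : (ℓ : S) = 0) (hg : aeval x (toPoly g) = 0) (l : List ℤ) :
    aeval x (toPoly (listRem ℓ g l)) = aeval x (toPoly l) := by
  induction l with
  | nil => rfl
  | cons a l ih =>
    rw [listRem] at ih
    rw [listRem, List.foldr_cons, remStep]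
    split_ifs
    · simp [toPoly_trimCons, ih, intCast_emod_of_cast_eq_zero hℓ]
    · simp [aeval_listMod hℓ, toPoly_addMul, hg, ih]

lemma aeval_powRem (hℓ : (ℓ : S) = 0) (hg : aeval x (toPoly g) = 0) (l : List ℤ) (n : ℕ) :
    aeval x (toPoly (powRem ℓ g l n)) = aeval x (toPoly l) ^ n := by
  induction n with
  | zero => simp [powRem]
  | succ n ih => rw [powRem, aeval_listRem hℓ hg, toPoly_listMul, map_mul, ih, pow_succ]

lemma aeval_frobRem (hℓ : (ℓ : S) = 0) (hg : aeval x (toPoly g) = 0) (n : ℕ) :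
    aeval x (toPoly (frobRem ℓ g n)) = x ^ ℓ ^ n := by
  induction n with
  | zero => simp [frobRem]
  | succ n ih => rw [frobRem, aeval_powRem hℓ hg, ih, ← pow_mul, pow_succ]

lemma pow_eq_self_of_frobRem (hℓ : (ℓ : S) = 0) (hg : aeval x (toPoly g) = 0) {n : ℕ}
    (hn : frobRem ℓ g n = [0, 1]) : x ^ ℓ ^ n = x := by
  rw [← aeval_frobRem hℓ hg, hn]
  simp

lemma mul_eq_one_of_listRem (hℓ : (ℓ : S) = 0) (hg : aeval x (toPoly g) = 0) {a b : List ℤ}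
    (hab : listRem ℓ g (listMul a b) = [1]) :
    aeval x (toPoly a) * aeval x (toPoly b) = 1 := by
  rw [← map_mul, ← toPoly_listMul, ← aeval_listRem hℓ hg, hab]
  simp

lemma pow_ne_self_of_listRem [Nontrivial S] (hℓ : (ℓ : S) = 0) (hg : aeval x (toPoly g) = 0)
    {n : ℕ} {a : List ℤ}
    (ha : listRem ℓ g (listMul a (addMul (-1) (frobRem ℓ g n) [0, 1])) = [1]) : x ^ ℓ ^ n ≠ x := by
  intro hx
  have h := mul_eq_one_of_listRem hℓ hg ha
  simp [toPoly_addMul, aeval_frobRem hℓ hg, hx] at h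

lemma separable_of_listRem (hℓ : (ℓ : S) = 0) {a : List ℤ}
    (ha : listRem ℓ g (listMul a (listDeriv g)) = [1]) :
    ((toPoly g).map (algebraMap ℤ S)).Separable := by
  set G := (toPoly g).map (algebraMap ℤ S) with hG
  have hmk (f : ℤ[X]) : aeval (AdjoinRoot.root G) f = AdjoinRoot.mk G (f.map (algebraMap ℤ S)) := by
    rw [← aeval_map_algebraMap S, AdjoinRoot.aeval_eq]
  have hroot : aeval (AdjoinRoot.root G) (toPoly g) = 0 := by rw [hmk, AdjoinRoot.mk_self]
  have hℓ' : (ℓ : AdjoinRoot G) = 0 := by simpa using congr(AdjoinRoot.of G $hℓ)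
  have hmul := mul_eq_one_of_listRem hℓ' hroot ha
  rw [hmk, hmk, ← map_mul, ← map_one (AdjoinRoot.mk G), AdjoinRoot.mk_eq_mk, toPoly_listDeriv,
    ← derivative_map, ← hG] at hmul
  obtain ⟨c, hc⟩ := hmul
  exact ⟨-c, (toPoly a).map (algebraMap ℤ S), by linear_combination hc⟩

lemma map_toPoly_eq_of_listMod (hℓ : (ℓ : S) = 0) {a b : List ℤ}
    (hab : listMod ℓ a = listMod ℓ b) :
    (toPoly a).map (algebraMap ℤ S) = (toPoly b).map (algebraMap ℤ S) := by
  have hX (l : List ℤ) : (toPoly l).map (algebraMap ℤ S) =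
      aeval (X : S[X]) (toPoly (listMod ℓ l)) := by
    rw [aeval_listMod (by simpa using congr(C $hℓ)), aeval_X_left_eq_map]
  rw [hX, hX, hab]

lemma aeval_intCast_toPoly (y : ℤ) (l : List ℤ) :
    aeval (y : S) (toPoly l) = (listEval y l : S) := by
  induction l with
  | nil => simp [listEval]
  | cons a l ih => simp [listEval, ih]

end ModularArithmetic

section ExactQuotient

/-- The first `n` coefficients of the power series quotient of `w` by `d`, assuming that all the
integer divisions involved are exact. -/
def exactQuotient (d : List ℤ) : ℕ → List ℤ → List ℤ
  | 0, _ => []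
  | n + 1, w =>
    let c := w.headD 0 / d.headD 0
    c :: exactQuotient d n (addMul (-c) w d).tail

/-- The `n` balanced digits of `a` in base `z`, least significant first. -/
def balancedDigits (z : ℕ) : ℕ → ℤ → List ℤ
  | 0, _ => []
  | n + 1, a =>
    ((a + (z / 2 : ℕ)) % z - (z / 2 : ℕ)) :: balancedDigits z n ((a + (z / 2 : ℕ)) / z)

/-- Divisibility of `f(x) g(y) - g(x) f(y)` by `d(x, y)` is certified by a quotient `e` for which
the identity holds at `y = z`, with `z` larger than any coefficient of the difference. -/
lemma dvd_of_kronecker {f g : List ℤ} {d e : List (List ℤ)} (z : ℕ)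
    (hz : addMul (-listEval z f) (addMul (listEval z g) [] f) g =
      listMul (d.map (listEval z)) (e.map (listEval z)))
    (hbound : absSum f * absSum g + absSum g * absSum f +
      (d.map absSum).sum * (e.map absSum).sum < z) :
    toPoly (d.map toPoly) ∣
      (toPoly f).map C * C (toPoly g) - (toPoly g).map C * C (toPoly f) := by
  set D := toPoly (d.map toPoly) with hD
  set E := toPoly (e.map toPoly) with hE
  have hcross (a b : List ℤ) : l1Seminorm intL1Norm ((toPoly a).map C * C (toPoly b)) ≤
      absSum a * absSum b := by
    refine (map_mul_le_mul _ _ _).trans ?_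
    rw [l1Seminorm_C]
    gcongr
    exacts [(l1Seminorm_map_C_le _ _).trans (intL1Norm_toPoly_le a), intL1Norm_toPoly_le b]
  have hDE : l1Seminorm intL1Norm (D * E) ≤ (d.map absSum).sum * (e.map absSum).sum := by
    refine (map_mul_le_mul _ _ _).trans ?_
    gcongr
    exacts [l1Seminorm_intL1Norm_toPoly_le d, l1Seminorm_intL1Norm_toPoly_le e]
  refine ⟨E, sub_eq_zero.mp (eq_zero_of_map_eval_eq_zero (z := (z : ℤ)) ?_ ?_)⟩
  · calc _ ≤ _ := (map_sub_le_add _ _ _).trans (add_le_add_left (map_sub_le_add _ _ _) _)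
      _ ≤ _ := add_le_add (add_le_add (hcross f g) (hcross g f)) hDE
      _ < ((z : ℤ) : ℝ) := by simpa using (Nat.cast_lt (α := ℝ)).mpr hbound
  · have heval := congr(toPoly $hz)
    rw [toPoly_listMul, toPoly_map_listEval, toPoly_map_listEval, ← hD, ← hE] at heval
    simp only [toPoly_addMul, toPoly_nil, zero_add, ← eval_toPoly, C_neg] at heval
    have hC (h : ℤ[X]) : (h.map C).map (evalRingHom (z : ℤ)) = h := by
      ext n
      simp
    simp only [Polynomial.map_sub, Polynomial.map_mul, hC, map_C, coe_evalRingHom, ← heval]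
    ring

end ExactQuotient

/-! ### The integral model of the covering and its self-correspondence -/

section IntegralModel

/-- The quadratic factor of the numerator `p`, made monic and integral by the substitution
`x ↦ x / 3`, which is applied to all the factors below. -/
def coeffsP₁ : List ℤ := [-9, -18, 1]

/-- The simple quartic factor of `p`. -/
def coeffsP₂ : List ℤ := [-135, -540, -774, -468, 1]

/-- The fourfold quartic factor of `p`. -/
def coeffsP₃ : List ℤ := [513, 540, 162, 36, 1]

/-- The octic factor of `p`. -/
def coeffsP₄ : List ℤ := [-10935, -58320, -84564, -25920, 40446, 3888, -36, -96, 1]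

/-- The double quadratic factor of `r`. -/
def coeffsR₁ : List ℤ := [27, 6, 1]

/-- The eightfold quadratic factor of `r`. -/
def coeffsR₂ : List ℤ := [3, 6, 1]

/-- The quartic factor of `r`. -/
def coeffsR₃ : List ℤ := [81, 108, 114, -12, 1]

/-- The numerator of the integral model of the covering. -/
def coeffsP : List ℤ :=
  listMul (listMul (listPow coeffsP₁ 2) coeffsP₂)
    (listMul (listPow coeffsP₃ 4) (listPow coeffsP₄ 4))

/-- The denominator of the integral model of the covering. -/
def coeffsR : List ℤ :=
  listMul (listPow coeffsR₁ 2) (listMul (listPow coeffsR₂ 8) (listPow coeffsR₃ 8))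

/-- The factor of degree `10` of `P(x) R(y) - R(x) P(y)`: a curve in the fibre square of the
covering, whose points are the pairs of adjacent points of a fibre. -/
def coeffsA : List (List ℤ) :=
  [[-315675954, -1182987666, -649952343, 2771996256, 5375348568, 3903611292, 1339585614,
    201238992, 8306226, -1850202, 6561],
   [-1182987666, -1683605088, 11618008848, 37115839440, 44067796308, 24991111440, 7149337992,
    848521008, 4920750, -8433072, 17496],
   [-649952343, 11618008848, 68123177928, 132365655576, 119715509574, 53817573528, 12324821004,
    955404072, -55146663, -15052392, 30132],
   [2771996256, 37115839440, 132365655576, 195671064960, 135656075808, 45048070944, 7432219152,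
    127090944, -87542208, -11559024, 22680],
   [5375348568, 44067796308, 119715509574, 135656075808, 66148579368, 13478690952, 1344115620,
    -140341248, -28466640, -2584764, 10566],
   [3903611292, 24991111440, 53817573528, 45048070944, 13478690952, 1225979712, -123755040,
    -70349472, -6219396, 6192, -2520],
   [1339585614, 7149337992, 12324821004, 7432219152, 1344115620, -123755040, -75876912, -11072592,
    -651042, 45144, 372],
   [201238992, 848521008, 955404072, 127090944, -140341248, -70349472, -11072592, -551808, 44784,
    3312, -24],
   [8306226, 4920750, -55146663, -87542208, -28466640, -6219396, -651042, 44784, 11670, -378, 1],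
   [-1850202, -8433072, -15052392, -11559024, -2584764, 6192, 45144, 3312, -378, 0, 0],
   [6561, 17496, 30132, 22680, 10566, -2520, 372, -24, 1, 0, 0]]

/-- `P(x) R(z) - R(x) P(z)`, as a polynomial in `x`. -/
def coeffsCross (z : ℤ) : List ℤ :=
  addMul (-listEval z coeffsP) (addMul (listEval z coeffsR) [] coeffsP) coeffsR

/-- The cofactor of `coeffsA` in `P(x) R(y) - R(x) P(y)`: the quotient is computed at `y = z`, and
its coefficients are unpacked from their base `z` digits. -/
def coeffsCofactor (z : ℕ) : List (List ℤ) :=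
  (exactQuotient (coeffsA.map (listEval z)) 47 (coeffsCross z)).map (balancedDigits z 47)

/-- The value of `y` used in the Kronecker substitution. -/
def kroneckerBase : ℕ := 2 ^ 512

set_option maxRecDepth 100000 in
set_option exponentiation.threshold 600 in
lemma coeffsCross_eq_listMul : coeffsCross kroneckerBase =
    listMul (coeffsA.map (listEval kroneckerBase))
      ((coeffsCofactor kroneckerBase).map (listEval kroneckerBase)) := by
  decide +kernel

set_option maxRecDepth 100000 in
set_option exponentiation.threshold 600 in
lemma absSum_lt_kroneckerBase :
    absSum coeffsP * absSum coeffsR + absSum coeffsR * absSum coeffsP +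
      (coeffsA.map absSum).sum * ((coeffsCofactor kroneckerBase).map absSum).sum <
        kroneckerBase := by
  decide +kernel

variable {S T : Type*} [CommRing S] [Algebra ℤ S] [CommRing T] [Algebra ℤ T]

/-- The fibre of the covering `-P / R` above `u`, as a polynomial. -/
noncomputable def fiber (u : S) : S[X] :=
  (toPoly coeffsP).map (algebraMap ℤ S) + C u * (toPoly coeffsR).map (algebraMap ℤ S)

/-- The polynomial whose roots are the points adjacent to `y` in the fibre through `y`. -/
noncomputable def neighborPoly (y : S) : S[X] :=
  (toPoly (coeffsA.map toPoly)).map ((aeval y : ℤ[X] →ₐ[ℤ] S) : ℤ[X] →+* S)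

lemma algebraMap_int_comp (φ : S →+* T) : φ.comp (algebraMap ℤ S) = algebraMap ℤ T :=
  Subsingleton.elim _ _

lemma map_aeval_int (φ : S →+* T) (y : S) (f : ℤ[X]) : φ (aeval y f) = aeval (φ y) f := by
  rw [aeval_def, hom_eval₂, algebraMap_int_comp, aeval_def]

lemma map_fiber (φ : S →+* T) (u : S) : (fiber u).map φ = fiber (φ u) := by
  simp only [fiber, Polynomial.map_add, Polynomial.map_mul, map_C, Polynomial.map_map,
    algebraMap_int_comp]

lemma map_neighborPoly (φ : S →+* T) (y : S) : (neighborPoly y).map φ = neighborPoly (φ y) := by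
  rw [neighborPoly, neighborPoly, Polynomial.map_map]
  congr 1
  ext f <;> simp

lemma eval_fiber (u y : S) :
    (fiber u).eval y = aeval y (toPoly coeffsP) + u * aeval y (toPoly coeffsR) := by
  simp [fiber, eval_map_algebraMap]

lemma fiber_intCast (u : ℤ) :
    fiber (u : S) = (toPoly (addMul u coeffsP coeffsR)).map (algebraMap ℤ S) := by
  simp [fiber, toPoly_addMul]

lemma neighborPoly_intCast (y : ℤ) :
    neighborPoly (y : S) = (toPoly (coeffsA.map (listEval y))).map (algebraMap ℤ S) := by
  rw [toPoly_map_listEval, Polynomial.map_map, neighborPoly]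
  congr 1
  ext f <;> simp

lemma neighborPoly_dvd (y : S) : neighborPoly y ∣
    C (aeval y (toPoly coeffsR)) * (toPoly coeffsP).map (algebraMap ℤ S) -
      C (aeval y (toPoly coeffsP)) * (toPoly coeffsR).map (algebraMap ℤ S) := by
  have hC : ((aeval y : ℤ[X] →ₐ[ℤ] S) : ℤ[X] →+* S).comp C = algebraMap ℤ S := Subsingleton.elim _ _
  have h := map_dvd (mapRingHom ((aeval y : ℤ[X] →ₐ[ℤ] S) : ℤ[X] →+* S))
    (dvd_of_kronecker kroneckerBase coeffsCross_eq_listMul absSum_lt_kroneckerBase)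
  simpa [neighborPoly, Polynomial.map_map, hC, mul_comm] using h

lemma neighborPoly_dvd_fiber {u y : S} (hy : (fiber u).eval y = 0) :
    neighborPoly y ∣ C (aeval y (toPoly coeffsR)) * fiber u := by
  rw [eval_fiber] at hy
  have hsplit : C (aeval y (toPoly coeffsR)) * fiber u =
      C (aeval y (toPoly coeffsR)) * (toPoly coeffsP).map (algebraMap ℤ S) -
        C (aeval y (toPoly coeffsP)) * (toPoly coeffsR).map (algebraMap ℤ S) := by
    have hCy := congr(C $hy)
    simp only [C_add, C_mul, C_0] at hCy
    rw [fiber]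
    linear_combination hCy * (toPoly coeffsR).map (algebraMap ℤ S)
  exact hsplit ▸ neighborPoly_dvd y

end IntegralModel

/-! ### Automorphisms of the Gewirtz graph -/

section TripleTransitivity

variable {G α : Type*} [Group G] [MulAction G α] {ρ τ σ : G} {u v w : α}

lemma exists_zpow_smul_eq_of_minimalPeriod [Finite α] (huv : u ≠ v) (hu : σ • u = u)
    (hv : σ • v = v) {x y : α} (hσ : Function.minimalPeriod (σ • ·) x + 2 = Nat.card α)
    (hxu : x ≠ u) (hxv : x ≠ v) (hyu : y ≠ u) (hyv : y ≠ v) : ∃ n : ℤ, σ ^ n • x = y := by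
  classical
  have := Fintype.ofFinite α
  let O := MulAction.orbit (Subgroup.zpowers σ) x
  have notMem {z : α} (hz : σ • z = z) (hxz : x ≠ z) : z ∉ O := by
    rintro ⟨⟨_, n, rfl⟩, hn⟩
    exact hxz (smul_left_cancel (σ ^ n) (hn.trans
      (zpow_mem (MulAction.mem_stabilizer_iff.mpr hz) n : _ ∈ MulAction.stabilizer G z).symm))
  have hsub : O.toFinset ⊆ {u, v}ᶜ := by
    intro z hz
    rw [Set.mem_toFinset] at hz
    simp only [Finset.mem_compl, Finset.mem_insert, Finset.mem_singleton, not_or]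
    exact ⟨fun h => notMem hu hxu (h ▸ hz), fun h => notMem hv hxv (h ▸ hz)⟩
  have hcard : O.toFinset.card = ({u, v}ᶜ : Finset α).card := by
    rw [Finset.card_compl, Finset.card_pair huv, Set.toFinset_card,
      ← Nat.card_eq_fintype_card (α := α), ← hσ, MulAction.minimalPeriod_eq_card,
      Nat.add_sub_cancel]
  have hy : y ∈ O.toFinset := by
    rw [Finset.eq_of_subset_of_card_le hsub hcard.ge]
    simp [hyu, hyv]
  obtain ⟨⟨_, n, rfl⟩, hn⟩ := Set.mem_toFinset.mp hy
  exact ⟨n, hn⟩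

lemma exists_smul_ne_ne (hρ : ∀ x : α, ρ • x ≠ x) (hτ : ∀ x : α, τ • τ • x = x → x = w)
    (u v z : α) : ∃ g : G, g • z ≠ u ∧ g • z ≠ v := by
  by_contra! hmem
  replace hmem (g : G) : g • z = u ∨ g • z = v := or_iff_not_imp_left.mpr (hmem g)
  -- An orbit inside a pair is fixed pointwise by `τ ^ 2`, hence equal to `{w}`; but `ρ` moves `w`.
  have third_eq_first {a b c : α} (ha : a = u ∨ a = v) (hb : b = u ∨ b = v) (hc : c = u ∨ c = v)
      (hab : b ≠ a) (hbc : c ≠ b) : c = a := by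
    clear hmem
    grind
  have hall (g : G) : g • z = w := by
    refine hτ _ ?_
    by_cases hfix : τ • g • z = g • z
    · rw [hfix, hfix]
    · refine third_eq_first (hmem g) ?_ ?_ hfix fun h => hfix (smul_left_cancel τ h)
      · simpa only [mul_smul] using hmem (τ * g)
      · simpa only [mul_smul] using hmem (τ * (τ * g))
  refine hρ w ?_
  conv_lhs => rw [← hall 1, ← mul_smul, hall]

/-- The hypotheses on three elements of a permutation group under which it is triply transitive:
`ρ` has no fixed point, `w` is fixed by `τ` and is the only fixed point of `τ ^ 2`, and `σ` fixes
`u ≠ v` and permutes the other points in a single cycle. -/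
structure IsTriplyTransitiveTriple (ρ τ σ : G) (u v w : α) : Prop where
  rho_smul_ne (x : α) : ρ • x ≠ x
  tau_smul : τ • w = w
  eq_of_tau_smul_tau_smul {x : α} : τ • τ • x = x → x = w
  ne : u ≠ v
  sigma_smul_left : σ • u = u
  sigma_smul_right : σ • v = v
  exists_zpow_smul_eq {x y : α} : x ≠ u → x ≠ v → y ≠ u → y ≠ v → ∃ n : ℤ, σ ^ n • x = y

namespace IsTriplyTransitiveTriple

variable (h : IsTriplyTransitiveTriple ρ τ σ u v w)
include h

lemma zpow_smul_left (n : ℤ) : σ ^ n • u = u :=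
  zpow_mem (MulAction.mem_stabilizer_iff.mpr h.sigma_smul_left) n

lemma zpow_smul_right (n : ℤ) : σ ^ n • v = v :=
  zpow_mem (MulAction.mem_stabilizer_iff.mpr h.sigma_smul_right) n

lemma isPretransitive : MulAction.IsPretransitive G α := by
  refine ⟨fun x y => ?_⟩
  obtain ⟨g, hgu, hgv⟩ := exists_smul_ne_ne h.rho_smul_ne (@h.eq_of_tau_smul_tau_smul) u v x
  obtain ⟨k, hku, hkv⟩ := exists_smul_ne_ne h.rho_smul_ne (@h.eq_of_tau_smul_tau_smul) u v y
  obtain ⟨n, hn⟩ := h.exists_zpow_smul_eq hgu hgv hku hkv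
  exact ⟨k⁻¹ * σ ^ n * g, by rw [mul_smul, mul_smul, hn, inv_smul_smul]⟩

lemma exists_smul_eq_self_smul_ne : ∃ t : G, t • u = u ∧ t • v ≠ v := by
  obtain ⟨g, hg⟩ := h.isPretransitive.exists_smul_eq w u
  refine ⟨g * τ * g⁻¹, ?_, fun hv => h.ne ?_⟩
  · rw [← hg, mul_smul, inv_smul_smul, mul_smul, h.tau_smul]
  · have hτv : τ • g⁻¹ • v = g⁻¹ • v := by rw [eq_inv_smul_iff, smul_smul, smul_smul, hv]
    rw [← hg, ← h.eq_of_tau_smul_tau_smul (x := g⁻¹ • v) (by rw [hτv, hτv]), smul_inv_smul]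

lemma exists_smul_eq_self_smul_eq {y : α} (hy : y ≠ u) : ∃ g : G, g • u = u ∧ g • y = v := by
  obtain rfl | hyv := eq_or_ne y v
  · exact ⟨1, one_smul _ _, one_smul _ _⟩
  obtain ⟨t, htu, htv⟩ := h.exists_smul_eq_self_smul_ne
  have htvu : t • v ≠ u := fun e => h.ne (smul_left_cancel t (htu.trans e.symm))
  obtain ⟨n, hn⟩ := h.exists_zpow_smul_eq hy hyv htvu htv
  refine ⟨t⁻¹ * σ ^ n, ?_, by rw [mul_smul, hn, inv_smul_smul]⟩
  rw [mul_smul, h.zpow_smul_left, inv_smul_eq_iff, htu]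

lemma exists_smul_embedding_eq (e : Fin 3 ↪ α) : ∃ g : G, g • e 0 = u ∧ g • e 1 = v := by
  obtain ⟨g, hg⟩ := h.isPretransitive.exists_smul_eq (e 0) u
  have hne : g • e 1 ≠ u := fun e' =>
    absurd (e.injective (smul_left_cancel g (e'.trans hg.symm))) (by decide)
  obtain ⟨k, hku, hkv⟩ := h.exists_smul_eq_self_smul_eq hne
  exact ⟨k * g, by rw [mul_smul, hg, hku], by rw [mul_smul, hkv]⟩

theorem isMultiplyPretransitive : MulAction.IsMultiplyPretransitive G α 3 := by
  refine ⟨fun e e' => ?_⟩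
  obtain ⟨g, hgu, hgv⟩ := h.exists_smul_embedding_eq e
  obtain ⟨k, hku, hkv⟩ := h.exists_smul_embedding_eq e'
  have third_ne {e : Fin 3 ↪ α} {g : G} {i : Fin 3} {x : α} (hi : 2 ≠ i) (hx : g • e i = x) :
      g • e 2 ≠ x := fun h₂ => hi (e.injective (smul_left_cancel g (h₂.trans hx.symm)))
  obtain ⟨n, hn⟩ := h.exists_zpow_smul_eq (third_ne (by decide) hgu) (third_ne (by decide) hgv)
    (third_ne (by decide) hku) (third_ne (by decide) hkv)
  refine ⟨k⁻¹ * σ ^ n * g, ?_⟩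
  ext i
  rw [Function.Embedding.smul_apply, mul_smul, mul_smul, inv_smul_eq_iff]
  fin_cases i
  · exact (congrArg _ hgu).trans ((h.zpow_smul_left n).trans hku.symm)
  · exact (congrArg _ hgv).trans ((h.zpow_smul_right n).trans hkv.symm)
  · exact hn

lemma exists_embedding_pow_smul_eq {b : α} (hbw : b ≠ w) (hb : τ ^ 3 • b = b) :
    ∃ e : Fin 3 ↪ α, τ ^ 3 • e = e := by
  have hb_ne : τ • b ≠ b := fun hτb => hbw (h.eq_of_tau_smul_tau_smul (by rw [hτb, hτb]))
  have hw_ne : τ • b ≠ w := fun hτb => hbw (smul_left_cancel τ (hτb.trans h.tau_smul.symm))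
  refine ⟨⟨![w, b, τ • b], ?_⟩, ?_⟩
  · intro i j hij
    fin_cases i <;> fin_cases j <;>
      simp_all [hbw.symm, hb_ne.symm, hw_ne.symm]
  · ext i
    fin_cases i
    · exact pow_mem (MulAction.mem_stabilizer_iff.mpr h.tau_smul : τ ∈ MulAction.stabilizer G w) 3
    · exact hb
    · change τ ^ 3 • τ • b = τ • b
      rw [smul_smul, pow_mul_comm', mul_smul, hb]

end IsTriplyTransitiveTriple

end TripleTransitivity

section GraphAction

variable {V : Type*} (Γ : SimpleGraph V)

/-- Each vertex of the list `l` is the only vertex with its adjacencies to the list `s` and to the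
entries of `l` before it. An automorphism fixing `s` then fixes `l`. -/
def IsAdjDetermined : List V → List V → Prop
  | _, [] => True
  | s, w :: l => (∀ x, (∀ y ∈ s, Γ.Adj x y ↔ Γ.Adj w y) → x = w) ∧ IsAdjDetermined (w :: s) l

instance instDecidableIsAdjDetermined [Fintype V] [DecidableEq V] [DecidableRel Γ.Adj] :
    ∀ s l : List V, Decidable (IsAdjDetermined Γ s l)
  | _, [] => isTrue trivial
  | s, w :: l =>
    have := instDecidableIsAdjDetermined (w :: s) l
    inferInstanceAs (Decidable (_ ∧ _))

variable {Γ} {G : Type*} [Group G] [MulAction G V]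

lemma adj_smul_left_iff (hΓ : ∀ (g : G) (v w : V), Γ.Adj (g • v) (g • w) ↔ Γ.Adj v w) {g : G}
    {w : V} (hw : g • w = w) (v : V) : Γ.Adj (g • v) w ↔ Γ.Adj v w := by
  conv_lhs => rw [← hw, hΓ]

lemma smul_eq_of_isAdjDetermined
    (hΓ : ∀ (g : G) (v w : V), Γ.Adj (g • v) (g • w) ↔ Γ.Adj v w) {g : G} :
    ∀ {s l : List V}, IsAdjDetermined Γ s l → (∀ y ∈ s, g • y = y) → ∀ w ∈ l, g • w = w
  | _, [], _, _ => by simp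
  | _, w :: l, ⟨hw, hl⟩, hs => by
    have hgw : g • w = w := hw _ fun y hy => adj_smul_left_iff hΓ (hs y hy) w
    exact List.forall_mem_cons.mpr
      ⟨hgw, smul_eq_of_isAdjDetermined hΓ hl (List.forall_mem_cons.mpr ⟨hgw, hs⟩)⟩

/-- The action of the stabilizer of a vertex `v` on the neighbours of `v`. -/
def neighborAction (hΓ : ∀ (g : G) (v w : V), Γ.Adj (g • v) (g • w) ↔ Γ.Adj v w) (v : V) :
    SubMulAction (MulAction.stabilizer G v) V where
  carrier := Γ.neighborSet v
  smul_mem' g w hw := (SimpleGraph.adj_comm _ _ _).mpr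
    ((adj_smul_left_iff hΓ g.2 w).mpr ((SimpleGraph.adj_comm _ _ _).mp hw))

end GraphAction

lemma descFactorial_mul_card_stabilizer {G α : Type*} [Group G] [MulAction G α] [Finite α] {n : ℕ}
    [MulAction.IsMultiplyPretransitive G α n] (e : Fin n ↪ α) :
    (Nat.card α).descFactorial n * Nat.card (MulAction.stabilizer G e) = Nat.card G := by
  have := Fintype.ofFinite α
  rw [← (MulAction.stabilizer G e).index_mul_card, MulAction.index_stabilizer_of_transitive,
    Nat.card_eq_fintype_card (α := α), Nat.card_eq_fintype_card (α := Fin n ↪ α),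
    Fintype.card_embedding_eq, Fintype.card_fin]

/-- The rows of the adjacency matrix of the Gewirtz graph, as bit masks. The vertices are numbered
by the roots of the split fibre modulo `2137` in increasing order. -/
def gewirtzRows : List ℕ :=
    [6757873979756864, 10135308989694084, 38703359065063682, 38315927573381136, 1127001576453192,
     11312084873126016, 27162928092284945, 22668768673009698, 1697680334020613, 45671515215106048,
     36198396704423952, 4820276185727040, 281474978497169, 18298078146855216, 9170012875264264,
     30685171049169920, 2814857409731586, 44565723910144, 36030172079745026, 37155277300043808,
     18054258372907012, 14074182627360788, 831076207496, 13263462992436, 9008437347749120,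
     45362626389082113, 18102363759968267, 3404229734826560, 13590514013118472, 703827305857025,
     6896216403223040, 17645375062034, 145135776636928, 857895021838410, 20347564333746176,
     36103703396286816, 19141261604765696, 283777769144456, 70446061192225, 20959713689668,
     2890066364203152, 40286793246211, 4506945416380416, 26214532480, 5348576662144032,
     1831786406610984, 1549538636595712, 105559021864132, 88106992711684, 18068283708211968,
     4609221597888786, 1117899554861, 37176688502638721, 320914018, 36591832939929792,
     22518032530933260]

/-- The Gewirtz graph, the strongly regular graph on 56 vertices with parameters (10, 0, 2). -/
def gewirtz : SimpleGraph (Fin 56) where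
  Adj i j := (gewirtzRows.getD i 0).testBit j
  symm := ⟨by decide +kernel⟩
  loopless := ⟨by decide +kernel⟩

instance : DecidableRel gewirtz.Adj := fun i j =>
  inferInstanceAs (Decidable ((gewirtzRows.getD i 0).testBit j = true))

section GewirtzAction

variable {G : Type*} [Group G] [MulAction G (Fin 56)]
  (hΓ : ∀ (g : G) (i j : Fin 56), gewirtz.Adj (g • i) (g • j) ↔ gewirtz.Adj i j)
include hΓ

lemma smul_one_eq_of_smul_eq {g : G} (hg : ∀ i ∈ ([0, 6, 8, 12] : List (Fin 56)), g • i = i) :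
    g • (1 : Fin 56) = 1 ∨ g • (1 : Fin 56) = 30 := by
  have hdet : IsAdjDetermined gewirtz [0, 6, 8, 12] [4, 14, 35, 3, 31, 33] := by decide +kernel
  have htwins : ∀ i, (∀ j ∈ [4, 14, 35, 3, 31, 33], gewirtz.Adj i j ↔ gewirtz.Adj 1 j) →
      i = 1 ∨ i = 30 := by
    decide +kernel
  exact htwins _ fun j hj =>
    adj_smul_left_iff hΓ (smul_eq_of_isAdjDetermined hΓ hdet hg j hj) 1

lemma eq_one_of_smul_eq [FaithfulSMul G (Fin 56)] {g : G}
    (hg : ∀ i ∈ ([0, 6, 8, 12, 1] : List (Fin 56)), g • i = i) : g = 1 := by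
  have hdet : IsAdjDetermined gewirtz [0, 6, 8, 12, 1] ([4, 14, 35, 7] ++ List.finRange 56) := by
    decide +kernel
  refine FaithfulSMul.eq_of_smul_eq_smul fun i : Fin 56 =>
    (?_ : g • i = i).trans (one_smul G i).symm
  exact smul_eq_of_isAdjDetermined hΓ hdet hg i (by simp)

lemma card_le_two [FaithfulSMul G (Fin 56)] (H : Subgroup G)
    (hH : ∀ g ∈ H, ∀ i ∈ ([0, 6, 8, 12] : List (Fin 56)), g • i = i) : Nat.card H ≤ 2 := by
  have himage (h : H) : h.1 • (1 : Fin 56) ∈ ({1, 30} : Finset (Fin 56)) := by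
    simpa using smul_one_eq_of_smul_eq hΓ (hH h.1 h.2)
  have hinj : Function.Injective fun h : H => (⟨_, himage h⟩ : ({1, 30} : Finset (Fin 56))) := by
    intro g h hgh
    have hone : (g⁻¹ * h).1 • (1 : Fin 56) = 1 := by
      have hgh : g.1 • (1 : Fin 56) = h.1 • 1 := Subtype.ext_iff.mp hgh
      rw [H.coe_mul, H.coe_inv, mul_smul, ← hgh, inv_smul_smul]
    refine inv_mul_eq_one.mp (Subtype.ext (eq_one_of_smul_eq hΓ ?_))
    exact List.forall_mem_append (l₁ := [0, 6, 8, 12]) |>.mpr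
      ⟨hH _ (g⁻¹ * h).2, List.forall_mem_singleton.mpr hone⟩
  calc Nat.card H ≤ Nat.card ({1, 30} : Finset (Fin 56)) := Nat.card_le_card_of_injective _ hinj
    _ = 2 := Nat.card_eq_card_toFinset _ |>.trans rfl

omit hΓ in
lemma card_neighborSet_gewirtz : Nat.card (gewirtz.neighborSet 0) = 10 := by
  rw [Nat.card_eq_fintype_card, SimpleGraph.card_neighborSet_eq_degree]
  decide +kernel

lemma card_stabilizer_le_two [FaithfulSMul G (Fin 56)] {e : Fin 3 ↪ neighborAction hΓ 0}
    (he : ∀ i, (e i : Fin 56) = ![6, 8, 12] i) :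
    Nat.card (MulAction.stabilizer (MulAction.stabilizer G (0 : Fin 56)) e) ≤ 2 := by
  rw [← Subgroup.card_map_of_injective (MulAction.stabilizer G (0 : Fin 56)).subtype_injective]
  refine card_le_two hΓ _ ?_
  rintro _ ⟨g, hg, rfl⟩
  have hfix (i : Fin 3) : g.1 • ![6, 8, 12] i = (![6, 8, 12] i : Fin 56) := by
    rw [← he]
    exact congrArg Subtype.val (DFunLike.congr_fun hg i)
  simp only [List.forall_mem_cons]
  exact ⟨g.2, hfix 0, hfix 1, hfix 2, by simp⟩

/-- Three elements of the stabilizer of the vertex `0` that force a group of automorphisms of the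
Gewirtz graph to be as large as possible: they make the action on the neighbours of `0` triply
transitive, and `τ ^ 3 ≠ 1` fixes the three neighbours `w`, `b` and `τ • b`. -/
structure IsFrobeniusTriple (ρ τ σ : MulAction.stabilizer G (0 : Fin 56))
    (u v w b : neighborAction hΓ 0) : Prop extends IsTriplyTransitiveTriple ρ τ σ u v w where
  ne_fixed : b ≠ w
  tau_pow_smul : τ ^ 3 • b = b
  tau_pow_ne : τ ^ 3 ≠ 1

theorem card_eq_of_isFrobeniusTriple [FaithfulSMul G (Fin 56)]
    [MulAction.IsPretransitive G (Fin 56)] {ρ τ σ : MulAction.stabilizer G (0 : Fin 56)}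
    {u v w b : neighborAction hΓ 0} (h : IsFrobeniusTriple hΓ ρ τ σ u v w b) :
    Nat.card G = 80640 := by
  have : Finite G := Finite.of_injective _ (MulAction.toPerm_injective (α := G) (β := Fin 56))
  have := h.isMultiplyPretransitive
  have hcard (e : Fin 3 ↪ neighborAction hΓ 0) := descFactorial_mul_card_stabilizer
    (G := MulAction.stabilizer G (0 : Fin 56)) e
  rw [show Nat.card (neighborAction hΓ 0) = 10 from card_neighborSet_gewirtz] at hcard
  have hle : Nat.card (MulAction.stabilizer G (0 : Fin 56)) ≤ 720 * 2 := by
    have hmem : ∀ i, gewirtz.Adj 0 (![6, 8, 12] i) := by decide +kernel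
    have hinj : Function.Injective (![6, 8, 12] : Fin 3 → Fin 56) := by decide
    let e : Fin 3 ↪ neighborAction hΓ 0 :=
      ⟨fun i => ⟨![6, 8, 12] i, hmem i⟩, fun i j hij => hinj (Subtype.ext_iff.mp hij)⟩
    rw [← hcard e]
    exact Nat.mul_le_mul_left _ (card_stabilizer_le_two hΓ fun i => rfl)
  have hge : 720 * 2 ≤ Nat.card (MulAction.stabilizer G (0 : Fin 56)) := by
    obtain ⟨e, he⟩ := h.exists_embedding_pow_smul_eq h.ne_fixed h.tau_pow_smul
    rw [← hcard e]
    refine Nat.mul_le_mul_left _ (Finite.one_lt_card_iff_nontrivial.mpr ?_)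
    exact (Subgroup.nontrivial_iff_exists_ne_one _).mpr ⟨_, he, h.tau_pow_ne⟩
  rw [← (MulAction.stabilizer G (0 : Fin 56)).index_mul_card,
    MulAction.index_stabilizer_of_transitive, le_antisymm hle hge, Nat.card_fin]

end GewirtzAction

/-! ### Frobenius elements -/

section FrobeniusModel

variable {G α k : Type*} [Group G] [MulAction G α] [Field k]

/-- The points of `α` correspond to the roots of `neighborPoly y₀` in a field of characteristic
`ℓ`, and `h` acts on them as the Frobenius map. -/
structure IsFrobeniusModel (ℓ : ℕ) (y₀ : ℤ) (h : G) (β : α → k) : Prop where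
  injective : Function.Injective β
  map_smul (x : α) : β (h • x) = β x ^ ℓ
  mem_range_iff (y : k) : y ∈ Set.range β ↔ (neighborPoly (y₀ : k)).eval y = 0

namespace IsFrobeniusModel

variable {ℓ : ℕ} {y₀ : ℤ} {h : G} {β : α → k} (hβ : IsFrobeniusModel ℓ y₀ h β)
include hβ

lemma map_pow_smul (n : ℕ) (x : α) : β (h ^ n • x) = β x ^ ℓ ^ n := by
  induction n with
  | zero => simp
  | succ n ih => rw [pow_succ', mul_smul, hβ.map_smul, ih, ← pow_mul, pow_succ]

lemma pow_smul_eq_iff (n : ℕ) (x : α) : h ^ n • x = x ↔ β x ^ ℓ ^ n = β x := by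
  rw [← hβ.injective.eq_iff, hβ.map_pow_smul]

lemma smul_eq_of_map_eq_intCast [Fact ℓ.Prime] [CharP k ℓ] {x : α} {y : ℤ} (hx : β x = y) :
    h • x = x :=
  hβ.injective (by rw [hβ.map_smul, hx]; exact map_intCast (frobenius k ℓ) y)

lemma aeval_map_eq_zero [CharP k ℓ] {f : List ℤ}
    (hf : listMod ℓ (coeffsA.map (listEval y₀)) = listMod ℓ f) (x : α) :
    aeval (β x) (toPoly f) = 0 := by
  rw [← eval_map_algebraMap, ← map_toPoly_eq_of_listMod (CharP.cast_eq_zero k ℓ) hf,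
    ← neighborPoly_intCast]
  exact (hβ.mem_range_iff _).mp ⟨x, rfl⟩

lemma exists_map_eq_intCast [CharP k ℓ] {y : ℤ}
    (hy : (ℓ : ℤ) ∣ listEval y (coeffsA.map (listEval y₀))) : ∃ x, β x = y := by
  refine (hβ.mem_range_iff _).mpr ?_
  rw [neighborPoly_intCast, eval_map_algebraMap, aeval_intCast_toPoly,
    CharP.intCast_eq_zero_iff k ℓ]
  exact hy

omit hβ in
lemma exists_aeval_ne_zero [Finite α] (hβ : Function.Injective β) {f : ℤ[X]} (hf : f.Monic)
    (hdeg : f.natDegree < Nat.card α) : ∃ x, aeval (β x) f ≠ 0 := by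
  have := Fintype.ofFinite α
  by_contra! hzero
  refine (hf.map (algebraMap ℤ k)).ne_zero
    (eq_zero_of_natDegree_lt_card_of_eval_eq_zero _ hβ (fun x => ?_) ?_)
  · rw [eval_map_algebraMap, hzero]
  · rw [hf.natDegree_map, ← Nat.card_eq_fintype_card]
    exact hdeg

end IsFrobeniusModel

/-- The reduction of `neighborPoly 5` modulo `7`, a polynomial without roots in `𝔽₇`. -/
def coeffsDegTen : List ℤ := [2, 1, 2, 1, 3, 1, 0, 6, 2, 3, 1]

/-- The cubic factor of `neighborPoly 3` modulo `7`. -/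
def coeffsCubic : List ℤ := [4, 1, 2, 1]

/-- The sextic factor of `neighborPoly 3` modulo `7`. -/
def coeffsSextic : List ℤ := [2, 4, 2, 3, 1, 2, 1]

/-- The octic factor of `neighborPoly 0` modulo `13`. -/
def coeffsOctic : List ℤ := [10, 8, 2, 10, 9, 11, 6, 3, 1]

lemma listMod_neighbor_five :
    listMod 7 (coeffsA.map (listEval 5)) = listMod 7 coeffsDegTen := by decide +kernel

lemma listMod_neighbor_three : listMod 7 (coeffsA.map (listEval 3)) =
    listMod 7 (listMul [-(4 * 6), 4] (listMul coeffsCubic coeffsSextic)) := by decide +kernel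

lemma listMod_neighbor_zero : listMod 13 (coeffsA.map (listEval 0)) =
    listMod 13 (listMul [-(9 * 5), 9] (listMul [-(1 * 7), 1] coeffsOctic)) := by decide +kernel

lemma aeval_linear_eq_zero_iff (ℓ : ℕ) [CharP k ℓ] {c y : ℤ} (hc : ¬(ℓ : ℤ) ∣ c) {x : k} :
    aeval x (toPoly [-(c * y), c]) = 0 ↔ x = y := by
  have hfactor : aeval x (toPoly [-(c * y), c]) = (c : k) * (x - y) := by
    simp only [toPoly_cons, toPoly_nil, map_add, map_mul, map_zero, aeval_C, aeval_X,
      algebraMap_int_eq, Int.coe_castRingHom]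
    push_cast
    ring
  rw [hfactor, mul_eq_zero, or_iff_right ((CharP.intCast_eq_zero_iff k ℓ c).not.mpr hc),
    sub_eq_zero]

instance : Fact (Nat.Prime 7) := ⟨by norm_num⟩
instance : Fact (Nat.Prime 13) := ⟨by norm_num⟩

theorem IsFrobeniusModel.smul_ne [CharP k 7] {ρ : G} {β : α → k} (hβ : IsFrobeniusModel 7 5 ρ β)
    (x : α) : ρ • x ≠ x := by
  have hinv : listRem 7 coeffsDegTen (listMul [6, 3, 0, 3, 4, 6, 5, 0, 6, 3]
      (addMul (-1) (frobRem 7 coeffsDegTen 1) [0, 1])) = [1] := by decide +kernel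
  have hne := pow_ne_self_of_listRem (CharP.cast_eq_zero k 7)
    (hβ.aeval_map_eq_zero listMod_neighbor_five x) hinv
  rwa [← pow_one ρ, Ne, hβ.pow_smul_eq_iff]

section Tau

variable [CharP k 7] {τ : G} {β : α → k}

lemma pow_ne_self_of_cubic {x : k} (hx : aeval x (toPoly coeffsCubic) = 0) : x ^ 7 ^ 2 ≠ x :=
  pow_ne_self_of_listRem (CharP.cast_eq_zero k 7) hx (a := [4, 6, 5]) (by decide +kernel)

lemma pow_eq_self_of_cubic {x : k} (hx : aeval x (toPoly coeffsCubic) = 0) : x ^ 7 ^ 3 = x :=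
  pow_eq_self_of_frobRem (CharP.cast_eq_zero k 7) hx (by decide +kernel)

lemma pow_two_ne_self_of_sextic {x : k} (hx : aeval x (toPoly coeffsSextic) = 0) : x ^ 7 ^ 2 ≠ x :=
  pow_ne_self_of_listRem (CharP.cast_eq_zero k 7) hx (a := [6, 1, 3, 3, 6, 3]) (by decide +kernel)

lemma pow_three_ne_self_of_sextic {x : k} (hx : aeval x (toPoly coeffsSextic) = 0) :
    x ^ 7 ^ 3 ≠ x :=
  pow_ne_self_of_listRem (CharP.cast_eq_zero k 7) hx (a := [6, 0, 1, 5, 2, 1]) (by decide +kernel)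

lemma IsFrobeniusModel.eq_six_or_cubic_or_sextic (hβ : IsFrobeniusModel 7 3 τ β) (x : α) :
    β x = (6 : ℤ) ∨ aeval (β x) (toPoly coeffsCubic) = 0 ∨
      aeval (β x) (toPoly coeffsSextic) = 0 := by
  have hzero := hβ.aeval_map_eq_zero listMod_neighbor_three x
  rwa [toPoly_listMul, map_mul, toPoly_listMul, map_mul, mul_eq_zero, mul_eq_zero,
    aeval_linear_eq_zero_iff 7 (by decide)] at hzero

theorem IsFrobeniusModel.exists_fixed_point_of_three (hβ : IsFrobeniusModel 7 3 τ β) :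
    ∃ w, β w = (6 : ℤ) ∧ τ • w = w ∧ ∀ x, τ • τ • x = x → x = w := by
  obtain ⟨w, hw⟩ := hβ.exists_map_eq_intCast (y := 6) (by decide +kernel)
  refine ⟨w, hw, hβ.smul_eq_of_map_eq_intCast hw, fun x hx => ?_⟩
  rw [smul_smul, ← pow_two, hβ.pow_smul_eq_iff] at hx
  obtain h | h | h := hβ.eq_six_or_cubic_or_sextic x
  · exact hβ.injective (h.trans hw.symm)
  · exact absurd hx (pow_ne_self_of_cubic h)
  · exact absurd hx (pow_two_ne_self_of_sextic h)

variable [Finite α] (hα : Nat.card α = 10)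
include hα

lemma IsFrobeniusModel.exists_aeval_cubic (hβ : IsFrobeniusModel 7 3 τ β) :
    ∃ x, β x ≠ (6 : ℤ) ∧ aeval (β x) (toPoly coeffsCubic) = 0 := by
  obtain ⟨x, hx⟩ := IsFrobeniusModel.exists_aeval_ne_zero hβ.injective
    (f := toPoly (listMul [-(1 * 6), 1] coeffsSextic))
    (monic_toPoly (n := 7) (by decide) (by decide))
    ((natDegree_toPoly_le (n := 7) (by decide)).trans_lt (by rw [hα]; norm_num))
  rw [toPoly_listMul, map_mul, mul_ne_zero_iff, Ne, aeval_linear_eq_zero_iff 7 (by decide)] at hx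
  exact ⟨x, hx.1, ((hβ.eq_six_or_cubic_or_sextic x).resolve_left hx.1).resolve_right hx.2⟩

lemma IsFrobeniusModel.exists_aeval_sextic (hβ : IsFrobeniusModel 7 3 τ β) :
    ∃ x, aeval (β x) (toPoly coeffsSextic) = 0 := by
  obtain ⟨x, hx⟩ := IsFrobeniusModel.exists_aeval_ne_zero hβ.injective
    (f := toPoly (listMul [-(1 * 6), 1] coeffsCubic))
    (monic_toPoly (n := 4) (by decide) (by decide))
    ((natDegree_toPoly_le (n := 4) (by decide)).trans_lt (by rw [hα]; norm_num))
  rw [toPoly_listMul, map_mul, mul_ne_zero_iff, Ne, aeval_linear_eq_zero_iff 7 (by decide)] at hx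
  exact ⟨x, ((hβ.eq_six_or_cubic_or_sextic x).resolve_left hx.1).resolve_left hx.2⟩

end Tau

section Sigma

variable [CharP k 13] {σ : G} {β : α → k}

lemma IsFrobeniusModel.eq_five_or_seven_or_octic (hβ : IsFrobeniusModel 13 0 σ β) (x : α) :
    β x = (5 : ℤ) ∨ β x = (7 : ℤ) ∨ aeval (β x) (toPoly coeffsOctic) = 0 := by
  have hzero := hβ.aeval_map_eq_zero listMod_neighbor_zero x
  rwa [toPoly_listMul, map_mul, toPoly_listMul, map_mul, mul_eq_zero, mul_eq_zero,
    aeval_linear_eq_zero_iff 13 (by decide), aeval_linear_eq_zero_iff 13 (by decide)] at hzero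

lemma IsFrobeniusModel.minimalPeriod_eq_eight (hβ : IsFrobeniusModel 13 0 σ β) {x : α}
    (hx : aeval (β x) (toPoly coeffsOctic) = 0) : Function.minimalPeriod (σ • ·) x = 8 := by
  have hfour : β x ^ 13 ^ 4 ≠ β x :=
    pow_ne_self_of_listRem (CharP.cast_eq_zero k 13) hx (a := [2, 1, 7, 1, 6, 11, 0, 5])
      (by decide +kernel)
  have height : β x ^ 13 ^ 8 = β x :=
    pow_eq_self_of_frobRem (CharP.cast_eq_zero k 13) hx (by decide +kernel)
  rw [← hβ.pow_smul_eq_iff] at height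
  rw [Ne, ← hβ.pow_smul_eq_iff] at hfour
  refine Function.minimalPeriod_eq_prime_pow (p := 2) (k := 2) ?_ ?_ <;>
    rwa [Function.IsPeriodicPt, Function.IsFixedPt, smul_iterate]

theorem IsFrobeniusModel.exists_fixed_pair [Finite α] (hα : Nat.card α = 10)
    (hβ : IsFrobeniusModel 13 0 σ β) : ∃ u v : α, u ≠ v ∧ σ • u = u ∧ σ • v = v ∧
      ∀ x y, x ≠ u → x ≠ v → y ≠ u → y ≠ v → ∃ n : ℤ, σ ^ n • x = y := by
  obtain ⟨u, hu⟩ := hβ.exists_map_eq_intCast (y := 5) (by decide +kernel)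
  obtain ⟨v, hv⟩ := hβ.exists_map_eq_intCast (y := 7) (by decide +kernel)
  have hσu := hβ.smul_eq_of_map_eq_intCast hu
  have hσv := hβ.smul_eq_of_map_eq_intCast hv
  have huv : u ≠ v := by
    rintro rfl
    rw [hu, ← sub_eq_zero, ← Int.cast_sub, CharP.intCast_eq_zero_iff k 13] at hv
    exact absurd hv (by decide)
  refine ⟨u, v, huv, hσu, hσv, fun x y hxu hxv =>
    exists_zpow_smul_eq_of_minimalPeriod huv hσu hσv ?_ hxu hxv⟩
  have hx : aeval (β x) (toPoly coeffsOctic) = 0 :=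
    ((hβ.eq_five_or_seven_or_octic x).resolve_left fun h => hxu (hβ.injective (h.trans hu.symm)))
      |>.resolve_left fun h => hxv (hβ.injective (h.trans hv.symm))
  rw [hβ.minimalPeriod_eq_eight hx, hα]

end Sigma

theorem card_eq_of_isFrobeniusModel [MulAction G (Fin 56)] [FaithfulSMul G (Fin 56)]
    [MulAction.IsPretransitive G (Fin 56)]
    (hΓ : ∀ (g : G) (i j : Fin 56), gewirtz.Adj (g • i) (g • j) ↔ gewirtz.Adj i j)
    {k₁ k₂ k₃ : Type*} [Field k₁] [CharP k₁ 7] [Field k₂] [CharP k₂ 7] [Field k₃] [CharP k₃ 13]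
    {ρ τ σ : MulAction.stabilizer G (0 : Fin 56)} {β₁ : neighborAction hΓ 0 → k₁}
    {β₂ : neighborAction hΓ 0 → k₂} {β₃ : neighborAction hΓ 0 → k₃}
    (hρ : IsFrobeniusModel 7 5 ρ β₁) (hτ : IsFrobeniusModel 7 3 τ β₂)
    (hσ : IsFrobeniusModel 13 0 σ β₃) : Nat.card G = 80640 := by
  have hcard : Nat.card (neighborAction hΓ 0) = 10 := card_neighborSet_gewirtz
  obtain ⟨w, hw, hτw, hτ_sq⟩ := hτ.exists_fixed_point_of_three
  obtain ⟨b, hb, hcubic⟩ := hτ.exists_aeval_cubic hcard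
  obtain ⟨c, hsextic⟩ := hτ.exists_aeval_sextic hcard
  obtain ⟨u, v, huv, hσu, hσv, htrans⟩ := hσ.exists_fixed_pair hcard
  have hτc : τ ^ 3 • c ≠ c :=
    (hτ.pow_smul_eq_iff 3 c).not.mpr (pow_three_ne_self_of_sextic hsextic)
  exact card_eq_of_isFrobeniusTriple hΓ (ρ := ρ) (σ := σ) (u := u) (v := v)
    (w := w) (b := b)
    { rho_smul_ne := hρ.smul_ne
      tau_smul := hτw
      eq_of_tau_smul_tau_smul := hτ_sq _
      ne := huv
      sigma_smul_left := hσu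
      sigma_smul_right := hσv
      exists_zpow_smul_eq := htrans _ _
      ne_fixed := fun hbw => hb (hbw.symm ▸ hw)
      tau_pow_smul := (hτ.pow_smul_eq_iff 3 b).mpr (pow_eq_self_of_cubic hcubic)
      tau_pow_ne := fun h => hτc (by rw [h, one_smul]) }

end FrobeniusModel

lemma eval_eq_zero_of_separable_map {B k : Type*} [CommRing B] [IsDomain B] [Field k]
    {φ : B →+* k} {f g : B[X]} {a : B} (hgf : g ∣ f) (hf : (f.map φ).Separable)
    (hfa : f.eval a = 0) (hga : (g.map φ).eval (φ a) = 0) : g.eval a = 0 := by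
  obtain ⟨h, rfl⟩ := hgf
  refine (mul_eq_zero.mp (eval_mul (R := B) ▸ hfa)).resolve_right fun hha => ?_
  rw [Polynomial.map_mul] at hf
  have hhφ : (h.map φ).eval (φ a) = 0 := by rw [eval_map_apply, hha, map_zero]
  obtain ⟨c, d, hcd⟩ := hf.isCoprime
  simpa [hga, hhφ] using congrArg (eval (φ a)) hcd

section Reduction

variable {B k ι : Type*} [CommRing B] [Field k] [Fintype ι] {φ : B →+* k} {u : B} {a : ι → B}

lemma fiber_map_eq_prod (hfiber : fiber u = ∏ i, (X - C (a i))) :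
    fiber (φ u) = ∏ i, (X - C (φ (a i))) := by
  rw [← map_fiber, hfiber, Polynomial.map_prod]
  simp

lemma exists_map_eq_of_eval_fiber (hfiber : fiber u = ∏ i, (X - C (a i))) {y : k}
    (hy : (fiber (φ u)).eval y = 0) : ∃ i, φ (a i) = y := by
  rw [fiber_map_eq_prod hfiber, eval_prod, Finset.prod_eq_zero_iff] at hy
  obtain ⟨i, -, hi⟩ := hy
  exact ⟨i, (sub_eq_zero.mp (by simpa using hi)).symm⟩

lemma eval_neighborPoly_map_eq_zero_iff [IsDomain B] (hfiber : fiber u = ∏ i, (X - C (a i)))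
    (hsep : (fiber (φ u)).Separable) {i j : ι} (hR : aeval (φ (a j)) (toPoly coeffsR) ≠ 0) :
    (neighborPoly (φ (a j))).eval (φ (a i)) = 0 ↔ (neighborPoly (a j)).eval (a i) = 0 := by
  have hroot (i : ι) : (fiber u).eval (a i) = 0 := by
    rw [hfiber, eval_prod, Finset.prod_eq_zero (Finset.mem_univ i) (by simp)]
  refine ⟨fun h => ?_, fun h => by rw [← map_neighborPoly, eval_map_apply, h, map_zero]⟩
  refine eval_eq_zero_of_separable_map (φ := φ) (neighborPoly_dvd_fiber (hroot j)) ?_ ?_ ?_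
  · rw [Polynomial.map_mul, map_C, map_fiber, map_aeval_int]
    exact Separable.unit_mul (isUnit_C.mpr hR.isUnit) hsep
  · rw [eval_mul, hroot, mul_zero]
  · rwa [map_neighborPoly]

lemma eval_fiber_eq_zero_of_neighborPoly {u y z : k} (hy : (fiber u).eval y = 0)
    (hR : aeval y (toPoly coeffsR) ≠ 0) (hz : (neighborPoly y).eval z = 0) :
    (fiber u).eval z = 0 := by
  have h := eval_eq_zero_of_dvd_of_eval_eq_zero (neighborPoly_dvd_fiber hy) hz
  rw [eval_mul, eval_C] at h
  exact (mul_eq_zero.mp h).resolve_left hR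

variable {ℓ : ℕ} [CharP k ℓ]

lemma separable_fiber_intCast {u₀ : ℤ} {c : List ℤ}
    (hc : listRem ℓ (addMul u₀ coeffsP coeffsR)
      (listMul c (listDeriv (addMul u₀ coeffsP coeffsR))) = [1]) : (fiber (u₀ : k)).Separable := by
  rw [fiber_intCast]
  exact separable_of_listRem (CharP.cast_eq_zero k ℓ) hc

lemma eval_fiber_intCast_eq_zero {u₀ y₀ : ℤ}
    (h : (ℓ : ℤ) ∣ listEval y₀ (addMul u₀ coeffsP coeffsR)) :
    (fiber (u₀ : k)).eval (y₀ : k) = 0 := by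
  rwa [fiber_intCast, eval_map_algebraMap, aeval_intCast_toPoly, CharP.intCast_eq_zero_iff k ℓ]

lemma aeval_coeffsR_intCast_ne_zero {y₀ : ℤ} (h : ¬(ℓ : ℤ) ∣ listEval y₀ coeffsR) :
    aeval (y₀ : k) (toPoly coeffsR) ≠ 0 := by
  rwa [aeval_intCast_toPoly, Ne, CharP.intCast_eq_zero_iff k ℓ]

end Reduction

/-- The inverse of the derivative of the fibre above `1`, modulo the fibre and `7`. -/
def coeffsInverse₁ : List ℤ :=
    [5, 0, 3, 3, 3, 6, 2, 6, 3, 5, 4, 0, 1, 2, 2, 3, 4, 3, 4, 0, 6, 6, 5, 1, 6, 5, 4, 3, 1, 6, 1, 1,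
     3, 5, 2, 2, 6, 4, 1, 3, 3, 2, 0, 6, 1, 2, 6, 0, 3, 1, 4, 0, 2, 2, 0, 2]

/-- The inverse of the derivative of the fibre above `3`, modulo the fibre and `7`. -/
def coeffsInverse₃ : List ℤ :=
    [1, 6, 5, 6, 1, 4, 5, 2, 3, 5, 1, 2, 1, 5, 4, 6, 5, 0, 3, 6, 5, 2, 2, 0, 1, 5, 5, 2, 6, 3, 4, 4,
     0, 1, 1, 2, 5, 3, 5, 5, 4, 5, 1, 4, 4, 4, 1, 4, 1, 6, 0, 3, 1, 5, 0, 4]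

/-- The inverse of the derivative of the fibre above `5`, modulo the fibre and `13`. -/
def coeffsInverse₅ : List ℤ :=
    [8, 9, 11, 3, 9, 5, 10, 8, 12, 0, 11, 8, 8, 4, 11, 11, 12, 6, 10, 1, 9, 11, 2, 10, 5, 8, 8, 7,
     3, 3, 1, 6, 9, 10, 0, 11, 8, 10, 1, 5, 7, 10, 10, 12, 10, 12, 4, 6, 4, 12, 10, 12, 6, 12, 10,
     12]

section Frobenius

universe v

/-- Every specialization of `u` modulo a prime has a Frobenius element in `G`. -/
def HasFrobeniusElements {B : Type v} [CommRing B] (G : Type*) [Group G] [MulSemiringAction G B]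
    (u : B) : Prop :=
  ∀ (ℓ : ℕ) [Fact ℓ.Prime] (u₀ : ℤ), ∃ (k : Type v) (_ : Field k) (_ : CharP k ℓ) (φ : B →+* k)
    (h : G), φ u = u₀ ∧ ∀ x, φ (h • x) = φ x ^ ℓ

variable {B : Type v} {G k : Type*} [CommRing B] [Group G] [MulSemiringAction G B]
  [MulAction G (Fin 56)] [Field k] {ℓ : ℕ}

/-- The family `a` labels the points of the fibre above `u` by vertices of the Gewirtz graph,
compatibly with the action of `G` and with adjacency. -/
structure IsGewirtzLabelling (G : Type*) [Group G] [MulSemiringAction G B] [MulAction G (Fin 56)]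
    (u : B) (a : Fin 56 → B) : Prop where
  smul_base (g : G) : g • u = u
  map_smul (g : G) (i : Fin 56) : a (g • i) = g • a i
  fiber_eq : fiber u = ∏ i, (X - C (a i))
  adj_iff (i j : Fin 56) : gewirtz.Adj i j ↔ (neighborPoly (a j)).eval (a i) = 0

namespace IsGewirtzLabelling

variable {u : B} {a : Fin 56 → B} (ha : IsGewirtzLabelling G u a)
include ha

lemma adj_smul_iff (g : G) (i j : Fin 56) :
    gewirtz.Adj (g • i) (g • j) ↔ gewirtz.Adj i j := by
  rw [ha.adj_iff, ha.adj_iff, ha.map_smul, ha.map_smul]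
  have hg := map_neighborPoly (MulSemiringAction.toRingHom G B g) (a j)
  rw [MulSemiringAction.toRingHom_apply] at hg
  rw [← hg, ← MulSemiringAction.toRingHom_apply, eval_map_apply]
  exact smul_eq_zero_iff_eq g

lemma smul_eq_self_of_map_eq_intCast [Fact ℓ.Prime] [CharP k ℓ] {φ : B →+* k}
    (hinj : Function.Injective (φ ∘ a)) {h : G} (hh : ∀ x, φ (h • x) = φ x ^ ℓ)
    {i : Fin 56} {y₀ : ℤ} (hi : φ (a i) = y₀) : h • i = i := by
  refine hinj ?_
  rw [Function.comp_apply, Function.comp_apply, ha.map_smul, hh, hi]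
  exact map_intCast (frobenius k ℓ) y₀

lemma isFrobeniusModel [IsDomain B] {φ : B →+* k} (hsep : (fiber (φ u)).Separable) {y₀ : ℤ}
    (hφ : φ (a 0) = y₀) (hR : aeval (y₀ : k) (toPoly coeffsR) ≠ 0)
    {h : MulAction.stabilizer G (0 : Fin 56)} (hh : ∀ x, φ (h.1 • x) = φ x ^ ℓ) :
    IsFrobeniusModel ℓ y₀ h
      fun i : neighborAction ha.adj_smul_iff 0 => φ (a i) where
  injective := by
    rw [fiber_map_eq_prod ha.fiber_eq] at hsep
    exact hsep.injective_of_prod_X_sub_C.comp Subtype.val_injective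
  map_smul i := (congrArg φ (ha.map_smul h.1 i)).trans (hh _)
  mem_range_iff y := by
    have hadj (i : Fin 56) :
        i ∈ neighborAction ha.adj_smul_iff 0 ↔ (neighborPoly (y₀ : k)).eval (φ (a i)) = 0 := by
      rw [← hφ, eval_neighborPoly_map_eq_zero_iff ha.fiber_eq hsep (by rwa [hφ]), ← ha.adj_iff]
      exact gewirtz.adj_comm 0 i
    refine ⟨?_, fun hy => ?_⟩
    · rintro ⟨i, rfl⟩
      exact (hadj i).mp i.2
    · have hroot : (fiber (φ u)).eval y = 0 := by
        refine eval_fiber_eq_zero_of_neighborPoly ?_ hR hy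
        rw [fiber_map_eq_prod ha.fiber_eq, eval_prod, ← hφ,
          Finset.prod_eq_zero (Finset.mem_univ 0) (by simp)]
      obtain ⟨i, rfl⟩ := exists_map_eq_of_eval_fiber ha.fiber_eq hroot
      exact ⟨⟨i, (hadj i).mpr hy⟩, rfl⟩

lemma exists_isFrobeniusModel [IsDomain B] [MulAction.IsPretransitive G (Fin 56)]
    (hfrob : HasFrobeniusElements G u) (ℓ : ℕ) [Fact ℓ.Prime] {u₀ y₀ : ℤ} {c : List ℤ}
    (hy : (ℓ : ℤ) ∣ listEval y₀ (addMul u₀ coeffsP coeffsR))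
    (hR : ¬(ℓ : ℤ) ∣ listEval y₀ coeffsR)
    (hc : listRem ℓ (addMul u₀ coeffsP coeffsR)
      (listMul c (listDeriv (addMul u₀ coeffsP coeffsR))) = [1]) :
    ∃ (k : Type v) (_ : Field k) (_ : CharP k ℓ) (h : MulAction.stabilizer G (0 : Fin 56))
      (β : neighborAction ha.adj_smul_iff 0 → k), IsFrobeniusModel ℓ y₀ h β := by
  obtain ⟨k, _, _, φ, h, hu, hh⟩ := hfrob ℓ u₀
  obtain ⟨i, hi⟩ := exists_map_eq_of_eval_fiber ha.fiber_eq (φ := φ)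
    (by rw [hu]; exact eval_fiber_intCast_eq_zero hy)
  -- Composing `φ` with an element of `G` and conjugating `h` moves the label `i` to `0`.
  obtain ⟨g, hg⟩ := MulAction.exists_smul_eq G 0 i
  let ψ := φ.comp (MulSemiringAction.toRingHom G B g)
  have hψ (x : B) : ψ x = φ (g • x) := rfl
  have hψu : ψ u = u₀ := by rw [hψ, ha.smul_base, hu]
  have hψ0 : ψ (a 0) = y₀ := by rw [hψ, ← ha.map_smul, hg, hi]
  have hψh (x : B) : ψ ((g⁻¹ * h * g) • x) = ψ x ^ ℓ := by
    rw [hψ, hψ, ← hh, mul_assoc, mul_smul, smul_inv_smul, mul_smul]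
  have hsep : (fiber (ψ u)).Separable := hψu ▸ separable_fiber_intCast hc
  have hinj : Function.Injective (ψ ∘ a) :=
    (fiber_map_eq_prod (φ := ψ) ha.fiber_eq ▸ hsep).injective_of_prod_X_sub_C
  exact ⟨k, _, ‹_›, ⟨_, ha.smul_eq_self_of_map_eq_intCast hinj hψh hψ0⟩, _,
    ha.isFrobeniusModel hsep hψ0 (aeval_coeffsR_intCast_ne_zero hR) hψh⟩

theorem card_eq [IsDomain B] [FaithfulSMul G (Fin 56)] [MulAction.IsPretransitive G (Fin 56)]
    (hfrob : HasFrobeniusElements G u) : Nat.card G = 80640 := by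
  obtain ⟨_, _, _, _, _, hρ⟩ := ha.exists_isFrobeniusModel hfrob 7 (u₀ := 1) (y₀ := 5)
    (c := coeffsInverse₁) (by decide +kernel) (by decide +kernel) (by decide +kernel)
  obtain ⟨_, _, _, _, _, hτ⟩ := ha.exists_isFrobeniusModel hfrob 7 (u₀ := 3) (y₀ := 3)
    (c := coeffsInverse₃) (by decide +kernel) (by decide +kernel) (by decide +kernel)
  obtain ⟨_, _, _, _, _, hσ⟩ := ha.exists_isFrobeniusModel hfrob 13 (u₀ := 5) (y₀ := 0)
    (c := coeffsInverse₅) (by decide +kernel) (by decide +kernel) (by decide +kernel)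
  exact card_eq_of_isFrobeniusModel ha.adj_smul_iff hρ hτ hσ

end IsGewirtzLabelling

end Frobenius

section SplitPrime

lemma length_coeffsP : coeffsP.length = 56 + 1 := by decide +kernel

lemma monic_toPoly_coeffsP : (toPoly coeffsP).Monic :=
  monic_toPoly length_coeffsP (by decide +kernel)

lemma natDegree_toPoly_coeffsP : (toPoly coeffsP).natDegree = 56 := by
  refine (natDegree_toPoly_le length_coeffsP.le).antisymm (le_natDegree_of_ne_zero ?_)
  rw [coeff_toPoly]
  decide +kernel

lemma natDegree_toPoly_coeffsR_le : (toPoly coeffsR).natDegree ≤ 52 :=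
  natDegree_toPoly_le (by decide +kernel)

section Degree

variable {S : Type*} [CommRing S] [Algebra ℤ S] [Nontrivial S] (u : S)

lemma natDegree_map_coeffsP :
    ((toPoly coeffsP).map (algebraMap ℤ S)).natDegree = 56 := by
  rw [monic_toPoly_coeffsP.natDegree_map, natDegree_toPoly_coeffsP]

lemma natDegree_C_mul_map_coeffsR_lt :
    (C u * (toPoly coeffsR).map (algebraMap ℤ S)).natDegree <
      ((toPoly coeffsP).map (algebraMap ℤ S)).natDegree := by
  rw [natDegree_map_coeffsP]
  exact (((natDegree_C_mul_le _ _).trans natDegree_map_le).trans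
    natDegree_toPoly_coeffsR_le).trans_lt (by norm_num)

lemma monic_fiber : (fiber u).Monic :=
  (monic_toPoly_coeffsP.map _).add_of_left (degree_lt_degree (natDegree_C_mul_map_coeffsR_lt u))

lemma natDegree_fiber : (fiber u).natDegree = 56 := by
  rw [fiber, natDegree_add_eq_left_of_natDegree_lt (natDegree_C_mul_map_coeffsR_lt u),
    natDegree_map_coeffsP]

end Degree

/-- The points of the fibre above `1198` modulo `2137`, where it splits completely, in the order
of the vertices of the Gewirtz graph. -/
def splitRoots : List ℤ :=
    [30, 34, 38, 42, 80, 85, 110, 146, 220, 269, 284, 285, 294, 400, 421, 447, 486, 637, 663, 748,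
     936, 945, 965, 973, 983, 1018, 1023, 1066, 1079, 1092, 1152, 1179, 1207, 1253, 1300, 1357,
     1369, 1402, 1408, 1412, 1579, 1603, 1655, 1681, 1789, 1809, 1830, 1849, 1850, 1906, 1918, 1959,
     1991, 2006, 2050, 2130]

/-- The `i`-th point of the fibre above `1198` modulo `2137`. -/
def splitRoot (i : Fin 56) : ℤ := splitRoots.getD i 0

lemma eq_of_dvd_splitRoot_sub :
    ∀ i j : Fin 56, (2137 : ℤ) ∣ splitRoot i - splitRoot j → i = j := by
  decide +kernel

lemma dvd_fiber_splitRoot : ∀ i : Fin 56,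
    ((2137 : ℕ) : ℤ) ∣ listEval (splitRoot i) (addMul 1198 coeffsP coeffsR) := by
  decide +kernel

lemma not_dvd_coeffsR_splitRoot :
    ∀ i : Fin 56, ¬((2137 : ℕ) : ℤ) ∣ listEval (splitRoot i) coeffsR := by
  decide +kernel

lemma adj_iff_dvd_splitRoot : ∀ j i : Fin 56, gewirtz.Adj i j ↔ (2137 : ℤ) ∣
    listEval (splitRoot i) (coeffsA.map (listEval (splitRoot j))) := by
  decide +kernel

variable {k : Type*} [Field k] [CharP k 2137]

lemma injective_splitRoot : Function.Injective fun i => (splitRoot i : k) := by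
  intro i j hij
  refine eq_of_dvd_splitRoot_sub i j ((CharP.intCast_eq_zero_iff k 2137 _).mp ?_)
  simpa [sub_eq_zero] using hij

lemma eval_fiber_splitRoot (i : Fin 56) :
    (fiber ((1198 : ℤ) : k)).eval (splitRoot i : k) = 0 :=
  eval_fiber_intCast_eq_zero (dvd_fiber_splitRoot i)

lemma aeval_coeffsR_splitRoot_ne_zero (i : Fin 56) :
    aeval (splitRoot i : k) (toPoly coeffsR) ≠ 0 :=
  aeval_coeffsR_intCast_ne_zero (not_dvd_coeffsR_splitRoot i)

lemma adj_iff_eval_splitRoot (i j : Fin 56) :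
    gewirtz.Adj i j ↔ (neighborPoly (splitRoot j : k)).eval (splitRoot i : k) = 0 := by
  rw [adj_iff_dvd_splitRoot, neighborPoly_intCast, eval_map_algebraMap, aeval_intCast_toPoly]
  exact (CharP.intCast_eq_zero_iff k 2137 _).symm

lemma fiber_eq_prod_splitRoot :
    fiber ((1198 : ℤ) : k) = ∏ i, (X - C (splitRoot i : k)) := by
  refine eq_of_monic_of_dvd_of_natDegree_le (monic_prod_X_sub_C _ _) (monic_fiber _) ?_ ?_
  · exact Finset.prod_dvd_of_coprime
      ((pairwise_coprime_X_sub_C injective_splitRoot).set_pairwise _)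
      fun i _ => dvd_iff_isRoot.mpr (eval_fiber_splitRoot i)
  · rw [natDegree_fiber, natDegree_finsetProd_X_sub_C_eq_card, Finset.card_fin]

lemma separable_fiber_split : (fiber ((1198 : ℤ) : k)).Separable := by
  rw [fiber_eq_prod_splitRoot, separable_prod_X_sub_C_iff]
  exact injective_splitRoot

lemma isCoprime_fiber_coeffsR :
    IsCoprime (fiber ((1198 : ℤ) : k)) ((toPoly coeffsR).map (algebraMap ℤ k)) := by
  rw [fiber_eq_prod_splitRoot]
  refine IsCoprime.prod_left fun i _ => ?_
  refine ((irreducible_X_sub_C _).coprime_iff_not_dvd).mpr fun hdvd => ?_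
  refine aeval_coeffsR_splitRoot_ne_zero (k := k) i ?_
  rwa [dvd_iff_isRoot, IsRoot, eval_map_algebraMap] at hdvd

instance : Fact (Nat.Prime 2137) := ⟨by norm_num⟩

variable {B ι : Type*} [CommRing B] [IsDomain B] [Fintype ι] {φ : B →+* k} {u : B} {a : ι → B}

lemma card_eq_of_fiber_eq_prod (hfiber : fiber u = ∏ i, (X - C (a i))) :
    Fintype.card ι = 56 := by
  have h := congr(natDegree $hfiber)
  simpa [natDegree_fiber] using h.symm

theorem exists_equiv_adj_iff (hfiber : fiber u = ∏ i, (X - C (a i))) (hφ : φ u = (1198 : ℤ)) :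
    ∃ e : Fin 56 ≃ ι, ∀ i j,
      gewirtz.Adj i j ↔ (neighborPoly (a (e j))).eval (a (e i)) = 0 := by
  have hroot (i : Fin 56) : ∃ x, φ (a x) = splitRoot i :=
    exists_map_eq_of_eval_fiber hfiber (hφ ▸ eval_fiber_splitRoot i)
  choose e he using hroot
  have hinj : Function.Injective e := fun i j hij =>
    injective_splitRoot (k := k) (by simp only [← he, hij])
  have hbij : Function.Bijective e := by
    rw [Fintype.bijective_iff_injective_and_card, card_eq_of_fiber_eq_prod hfiber]
    exact ⟨hinj, Fintype.card_fin 56⟩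
  refine ⟨.ofBijective e hbij, fun i j => ?_⟩
  have hR : aeval (φ (a (e j))) (toPoly coeffsR) ≠ 0 := he j ▸ aeval_coeffsR_splitRoot_ne_zero j
  rw [Equiv.ofBijective_apply, Equiv.ofBijective_apply,
    ← eval_neighborPoly_map_eq_zero_iff hfiber (hφ ▸ separable_fiber_split) hR, he, he]
  exact adj_iff_eval_splitRoot i j

end SplitPrime

/-! ### The Galois group of the integral model -/

section CardOfAction

variable {B G ι : Type*} [CommRing B] [IsDomain B] [Group G] [MulSemiringAction G B]
  [Fintype ι] [MulAction G ι] {u : B} {a : ι → B}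

theorem card_eq_of_hasFrobeniusElements [FaithfulSMul G ι] [MulAction.IsPretransitive G ι]
    (hu : ∀ g : G, g • u = u) (ha : ∀ (g : G) i, a (g • i) = g • a i)
    (hfiber : fiber u = ∏ i, (X - C (a i))) (hfrob : HasFrobeniusElements G u) :
    Nat.card G = 80640 := by
  obtain ⟨k, _, _, φ, -, hφ, -⟩ := hfrob 2137 1198
  obtain ⟨e, he⟩ := exists_equiv_adj_iff hfiber hφ
  let : MulAction G (Fin 56) := e.mulAction G
  have hsmul (g : G) (i : Fin 56) : e (g • i) = g • e i := e.apply_symm_apply _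
  have : FaithfulSMul G (Fin 56) := by
    refine ⟨fun {g h} hgh => FaithfulSMul.eq_of_smul_eq_smul fun x : ι => ?_⟩
    simpa [hsmul] using congr(e $(hgh (e.symm x)))
  have : MulAction.IsPretransitive G (Fin 56) := ⟨fun i j => by
    obtain ⟨g, hg⟩ := MulAction.exists_smul_eq G (e i) (e j)
    exact ⟨g, e.injective ((hsmul g i).trans hg)⟩⟩
  have hlabel : IsGewirtzLabelling G u (a ∘ e) :=
    { smul_base := hu
      map_smul := fun g i => by simp only [Function.comp_apply, hsmul, ha]
      fiber_eq := hfiber.trans (e.prod_comp fun i => X - C (a i)).symm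
      adj_iff := he }
  exact hlabel.card_eq hfrob

end CardOfAction

section FrobeniusElements

universe v

variable {B : Type v} {G : Type*} [CommRing B] [Algebra ℤ[X] B] [Module.Finite ℤ[X] B]
  [FaithfulSMul ℤ[X] B] [Group G] [Finite G] [MulSemiringAction G B] [SMulCommClass G ℤ[X] B]
  [Algebra.IsInvariant ℤ[X] B G]

lemma exists_frobenius_of_isMaximal (P : Ideal ℤ[X]) [P.IsMaximal] [Finite (ℤ[X] ⧸ P)] :
    ∃ (k : Type v) (_ : Field k) (φ : B →+* k) (h : G), (∀ f ∈ P, φ (algebraMap ℤ[X] B f) = 0) ∧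
      ∀ x, φ (h • x) = φ x ^ Nat.card (ℤ[X] ⧸ P) := by
  obtain ⟨Q, _, hQP⟩ := Ideal.exists_maximal_ideal_liesOver_of_isIntegral P (S := B)
  have : Finite (B ⧸ Q) := Module.finite_of_finite (ℤ[X] ⧸ P)
  obtain ⟨h, hh⟩ := IsArithFrobAt.exists_of_isInvariant ℤ[X] G Q
  refine ⟨B ⧸ Q, Ideal.Quotient.field Q, Ideal.Quotient.mk Q, h, fun f hf => ?_, fun x => ?_⟩
  · rw [hQP.over] at hf
    exact Ideal.Quotient.eq_zero_iff_mem.mpr hf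
  · rw [← map_pow, Ideal.Quotient.eq, hQP.over]
    exact hh x

theorem hasFrobeniusElements_algebraMap_X :
    HasFrobeniusElements G (algebraMap ℤ[X] B X) := by
  intro ℓ hℓ u₀
  let θ : ℤ[X] →+* ZMod ℓ := eval₂RingHom (Int.castRingHom _) (u₀ : ZMod ℓ)
  have hθ : Function.Surjective θ := fun y => by
    obtain ⟨n, rfl⟩ := ZMod.intCast_surjective y
    exact ⟨C n, by simp [θ]⟩
  have := RingHom.ker_isMaximal_of_surjective θ hθ
  let e := RingHom.quotientKerEquivOfSurjective hθ
  have : NeZero ℓ := ⟨hℓ.out.ne_zero⟩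
  have : Finite (ℤ[X] ⧸ RingHom.ker θ) := .of_equiv _ e.symm.toEquiv
  have hcard : Nat.card (ℤ[X] ⧸ RingHom.ker θ) = ℓ := by
    rw [Nat.card_congr e.toEquiv, Nat.card_zmod]
  obtain ⟨k, _, φ, h, hφ, hh⟩ := exists_frobenius_of_isMaximal (B := B) (G := G) (RingHom.ker θ)
  have hchar : (ℓ : k) = 0 := by simpa using hφ (C (ℓ : ℤ)) (by simp [θ, RingHom.mem_ker])
  refine ⟨k, _, (CharP.charP_iff_prime_eq_zero hℓ.out).mpr hchar, φ, h, ?_, hcard ▸ hh⟩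
  have hX := hφ (X - C u₀) (by simp [θ, RingHom.mem_ker])
  rw [map_sub, map_sub, sub_eq_zero] at hX
  rw [hX]
  simp

end FrobeniusElements

section Irreducible

lemma isRelPrime_of_isCoprime_map {R k : Type*} [CommRing R] [IsDomain R] [Field k] (φ : R →+* k)
    {f g : R[X]} (hf : f.Monic) (hfg : IsCoprime (f.map φ) (g.map φ)) : IsRelPrime f g := by
  intro d hdf hdg
  have hlead : IsUnit d.leadingCoeff := by
    obtain ⟨e, rfl⟩ := hdf
    exact .of_mul_eq_one e.leadingCoeff (by rw [← leadingCoeff_mul, hf.leadingCoeff])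
  have hunit : IsUnit (d.map φ) := hfg.isUnit_of_dvd' (map_dvd φ hdf) (map_dvd φ hdg)
  have hdeg : d.natDegree = 0 := by
    rw [← natDegree_map_of_leadingCoeff_ne_zero φ (hlead.map φ).ne_zero]
    exact natDegree_eq_zero_of_isUnit hunit
  rw [eq_C_of_natDegree_eq_zero hdeg, isUnit_C]
  rwa [leadingCoeff, hdeg] at hlead

lemma isRelPrime_coeffsP_coeffsR : IsRelPrime (toPoly coeffsP) (toPoly coeffsR) := by
  refine isRelPrime_of_isCoprime_map (algebraMap ℤ (ZMod 2137)) monic_toPoly_coeffsP ?_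
  have h := isCoprime_fiber_coeffsR (k := ZMod 2137)
  exact IsCoprime.of_add_mul_right_left h

lemma irreducible_fiber_X : Irreducible (fiber (X : ℤ[X])) := by
  have hR : toPoly coeffsR ≠ 0 := fun hR => by
    have h := isRelPrime_coeffsP_coeffsR
    rw [hR, isRelPrime_zero_right] at h
    exact absurd (natDegree_eq_zero_of_isUnit h) (by simp [natDegree_toPoly_coeffsP])
  have hswap : fiber (X : ℤ[X]) =
      Bivariate.swap (C (toPoly coeffsR) * X + C (toPoly coeffsP)) := by
    rw [map_add, map_mul, Bivariate.swap_C, Bivariate.swap_C, Bivariate.swap_Y, fiber, add_comm,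
      mul_comm]
    rfl
  rw [hswap, MulEquiv.irreducible_iff]
  exact irreducible_C_mul_X_add_C hR isRelPrime_coeffsP_coeffsR.symm

variable {K : Type*} [Field K] [Algebra ℤ[X] K] [IsFractionRing ℤ[X] K]

lemma irreducible_fiber : Irreducible (fiber (algebraMap ℤ[X] K X)) := by
  rw [← map_fiber, ← (monic_fiber _).irreducible_iff_irreducible_map_fraction_map]
  exact irreducible_fiber_X

end Irreducible

section SplittingField

variable {K L : Type*} [Field K] [Field L] [Algebra K L]

lemma eq_prod_rootSet {f : K[X]} (hf : f.Monic) (hsep : f.Separable)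
    (hsplits : (f.map (algebraMap K L)).Splits) :
    f.map (algebraMap K L) = ∏ x : f.rootSet L, (X - C x.1) := by
  refine eq_of_monic_of_dvd_of_natDegree_le (monic_prod_X_sub_C _ _) (hf.map _) ?_ ?_
  · refine Finset.prod_dvd_of_coprime
      ((pairwise_coprime_X_sub_C Subtype.val_injective).set_pairwise _) fun x _ => ?_
    rw [dvd_iff_isRoot, IsRoot, eval_map_algebraMap]
    exact aeval_eq_zero_of_mem_rootSet x.2
  · rw [natDegree_finsetProd_X_sub_C_eq_card, natDegree_map, Finset.card_univ,
      card_rootSet_eq_natDegree hsep hsplits]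

lemma isPretransitive_rootSet [Normal K L] {f : K[X]} (hf : Irreducible f) :
    MulAction.IsPretransitive (L ≃ₐ[K] L) (f.rootSet L) := by
  refine ⟨fun x y => ?_⟩
  have hx := minpoly.eq_of_irreducible hf (aeval_eq_zero_of_mem_rootSet x.2)
  have hy := minpoly.eq_of_irreducible hf (aeval_eq_zero_of_mem_rootSet y.2)
  obtain ⟨g, hg⟩ := (Normal.minpoly_eq_iff_mem_orbit L).mp (hy.symm.trans hx)
  exact ⟨g, Subtype.ext hg⟩

lemma faithfulSMul_rootSet (f : K[X]) [IsSplittingField K L f] :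
    FaithfulSMul (L ≃ₐ[K] L) (f.rootSet L) := by
  refine ⟨fun {g h} hgh => AlgEquiv.coe_toAlgHom_injective ?_⟩
  exact AlgHom.ext_of_adjoin_eq_top (IsSplittingField.adjoin_rootSet L f)
    fun x hx => congrArg Subtype.val (hgh ⟨x, hx⟩)

variable [Algebra ℤ[X] K] [Algebra ℤ[X] L] [IsScalarTower ℤ[X] K L]

lemma isIntegral_of_mem_rootSet_fiber {x : L}
    (hx : x ∈ (fiber (algebraMap ℤ[X] K X)).rootSet L) : IsIntegral ℤ[X] x := by
  refine ⟨fiber X, monic_fiber X, ?_⟩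
  rw [← aeval_eq_zero_of_mem_rootSet hx, ← map_fiber, aeval_map_algebraMap, aeval_def]

variable [IsFractionRing ℤ[X] K]

lemma hasFrobeniusElements_integralClosure [FiniteDimensional K L] [IsGalois K L] :
    HasFrobeniusElements (L ≃ₐ[K] L) (algebraMap ℤ[X] (integralClosure ℤ[X] L) X) := by
  have := IsIntegralClosure.finite ℤ[X] K L (integralClosure ℤ[X] L)
  have := integralClosure.isFractionRing_of_finite_extension (A := ℤ[X]) K L
  have : IsGaloisGroup (L ≃ₐ[K] L) ℤ[X] (integralClosure ℤ[X] L) := .of_isFractionRing _ _ _ K L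
  have : FaithfulSMul ℤ[X] L := .trans ℤ[X] K L
  have : FaithfulSMul ℤ[X] (integralClosure ℤ[X] L) := .tower_bot ℤ[X] _ L
  exact hasFrobeniusElements_algebraMap_X

theorem card_algEquiv_of_isSplittingField
    [IsSplittingField K L (fiber (algebraMap ℤ[X] K X))] : Nat.card (L ≃ₐ[K] L) = 80640 := by
  set f := fiber (algebraMap ℤ[X] K X)
  have : CharZero K := charZero_of_injective_algebraMap (IsFractionRing.injective ℤ[X] K)
  have hsep : f.Separable := irreducible_fiber.separable
  have : IsGalois K L := .of_separable_splitting_field hsep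
  have : FiniteDimensional K L := IsSplittingField.finiteDimensional L f
  have := faithfulSMul_rootSet (L := L) f
  have := isPretransitive_rootSet (L := L) (f := f) irreducible_fiber
  let a (x : f.rootSet L) : integralClosure ℤ[X] L := ⟨x, isIntegral_of_mem_rootSet_fiber x.2⟩
  refine card_eq_of_hasFrobeniusElements (a := a) (fun g => smul_algebraMap g X)
    (fun g x => Subtype.ext rfl) ?_ hasFrobeniusElements_integralClosure
  have hroots := eq_prod_rootSet (monic_fiber _) hsep (IsSplittingField.splits L f)
  apply map_injective (algebraMap (integralClosure ℤ[X] L) L) Subtype.val_injective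
  rw [map_fiber, ← IsScalarTower.algebraMap_apply, IsScalarTower.algebraMap_apply ℤ[X] K L,
    ← map_fiber]
  simpa [Polynomial.map_prod, a] using hroots

end SplittingField

/-! ### The Belyi map over a field generated by its parameter -/

section Generator

variable {K L : Type*} [Field K] {u : K}

lemma ne_one_of_transcendental (hu : Transcendental ℤ u) : u ≠ 1 :=
  fun h => hu (h ▸ isAlgebraic_one)

lemma exists_eq_aeval_div_aeval (hgen : Subfield.closure {u} = ⊤) (z : K) :
    ∃ f g : ℤ[X], z = aeval u f / aeval u g := by
  have hrange : Subring.closure {u} ≤ (aeval u : ℤ[X] →ₐ[ℤ] K).toRingHom.range := by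
    rw [Subring.closure_le, Set.singleton_subset_iff]
    exact ⟨X, aeval_X u⟩
  have hz : z ∈ Subfield.closure {u} := hgen ▸ Subfield.mem_top z
  obtain ⟨y, hy, w, hw, rfl⟩ := Subfield.mem_closure_iff.mp hz
  obtain ⟨f, rfl⟩ := hrange hy
  obtain ⟨g, rfl⟩ := hrange hw
  exact ⟨f, g, rfl⟩

lemma isFractionRing_of_transcendental [Algebra ℤ[X] K] (hX : algebraMap ℤ[X] K X = u)
    (hu : Transcendental ℤ u) (hgen : Subfield.closure {u} = ⊤) : IsFractionRing ℤ[X] K := by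
  have haeval (f : ℤ[X]) : algebraMap ℤ[X] K f = aeval u f := by
    rw [← hX, ← map_aeval_int, aeval_X_left_apply]
  have : FaithfulSMul ℤ[X] K := (faithfulSMul_iff_algebraMap_injective _ _).mpr fun f g hfg =>
    transcendental_iff_injective.mp hu (by rwa [← haeval, ← haeval])
  refine IsFractionRing.of_field ℤ[X] K fun z => ?_
  simpa only [haeval] using exists_eq_aeval_div_aeval hgen z

-- `Algebra ℚ K` is not an instance argument, since on `RatFunc ℚ` it has two instances which are
-- not definitionally equal.
lemma transcendental_int_of_rat {_ : Algebra ℚ K} (hu : Transcendental ℚ u) : Transcendental ℤ u :=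
  hu.restrictScalars Int.cast_injective

lemma closure_eq_top_of_adjoin_rat {_ : Algebra ℚ K} (hgen : IntermediateField.adjoin ℚ {u} = ⊤) :
    Subfield.closure {u} = ⊤ := by
  rw [eq_top_iff, ← IntermediateField.top_toSubfield (F := ℚ), ← hgen,
    IntermediateField.adjoin_toSubfield, Subfield.closure_le, Set.union_subset_iff,
    Set.range_subset_iff]
  refine ⟨fun a => ?_, Subfield.subset_closure⟩
  rw [eq_ratCast]
  exact SubfieldClass.ratCast_mem _ a

lemma irreducible_fiber_of_transcendental (hu : Transcendental ℤ u)
    (hgen : Subfield.closure {u} = ⊤) : Irreducible (fiber u) := by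
  let : Algebra ℤ[X] K := (aeval u).toRingHom.toAlgebra
  have hX : algebraMap ℤ[X] K X = u := aeval_X u
  have := isFractionRing_of_transcendental hX hu hgen
  exact hX ▸ irreducible_fiber

lemma card_algEquiv_of_transcendental [Field L] [Algebra K L] (hu : Transcendental ℤ u)
    (hgen : Subfield.closure {u} = ⊤) (hL : IsSplittingField K L (fiber u)) :
    Nat.card (L ≃ₐ[K] L) = 80640 := by
  let : Algebra ℤ[X] K := (aeval u).toRingHom.toAlgebra
  have hX : algebraMap ℤ[X] K X = u := aeval_X u
  have := isFractionRing_of_transcendental hX hu hgen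
  let : Algebra ℤ[X] L := ((algebraMap K L).comp (algebraMap ℤ[X] K)).toAlgebra
  have : IsScalarTower ℤ[X] K L := .of_algebraMap_eq fun _ => rfl
  have : IsSplittingField K L (fiber (algebraMap ℤ[X] K X)) := hX.symm ▸ hL
  exact card_algEquiv_of_isSplittingField

end Generator

section Rescaling

variable {K L : Type*} [Field K] [Field L] [Algebra K L] {f g : K[X]} {a c : K}

lemma irreducible_C_mul_comp_C_mul_X (ha : a ≠ 0) (hc : c ≠ 0) (hf : Irreducible f) :
    Irreducible (C c * f.comp (C a * X)) := by
  have := invertibleOfNonzero ha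
  rw [irreducible_isUnit_mul (isUnit_C.mpr hc.isUnit)]
  have h := (MulEquiv.irreducible_iff (algEquivCMulXAddC a 0)).mpr hf
  simpa [comp_eq_aeval] using h

lemma isSplittingField_of_C_mul_comp_C_mul_X (ha : a ≠ 0) (hc : c ≠ 0)
    (hg : g = C c * f.comp (C a * X)) [IsSplittingField K L g] : IsSplittingField K L f := by
  have hroot (x : L) (hx : x ∈ g.rootSet L) : algebraMap K L a * x ∈ f.rootSet L := by
    rw [mem_rootSet', hg] at hx
    refine mem_rootSet'.mpr ⟨fun h => hx.1 (by simp [Polynomial.map_comp, h]), ?_⟩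
    simpa [aeval_comp, hc] using hx.2
  refine ⟨?_, ?_⟩
  · have hlin : (C (algebraMap K L a) * X).natDegree = 1 := natDegree_C_mul_X _ (by simpa using ha)
    have h := (IsSplittingField.splits L g).C_mul (algebraMap K L c⁻¹)
    rw [← map_C, ← Polynomial.map_mul, hg, ← mul_assoc, ← C_mul, inv_mul_cancel₀ hc, C_1,
      one_mul] at h
    rw [splits_iff_comp_splits_of_natDegree_eq_one hlin]
    simpa [Polynomial.map_comp] using h
  · rw [eq_top_iff, ← IsSplittingField.adjoin_rootSet L g, Algebra.adjoin_le_iff]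
    intro x hx
    have h := Subalgebra.smul_mem _ (Algebra.subset_adjoin (hroot x hx)) a⁻¹
    rwa [← Algebra.smul_def, inv_smul_smul₀ ha] at h

end Rescaling

section BelyiMap

lemma aeval_three_mul_X_coeffsP : aeval (3 * X : ℚ[X]) (toPoly coeffsP) = 3 ^ 47 * p := by
  have h₁ : aeval (3 * X : ℚ[X]) (toPoly coeffsP₁) = 9 * (X ^ 2 - 6 * X - 1) := by
    simp [coeffsP₁, map_ofNat]; ring
  have h₂ : aeval (3 * X : ℚ[X]) (toPoly coeffsP₂) =
      27 * (3 * X ^ 4 - 468 * X ^ 3 - 258 * X ^ 2 - 60 * X - 5) := by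
    simp [coeffsP₂, map_ofNat]; ring
  have h₃ : aeval (3 * X : ℚ[X]) (toPoly coeffsP₃) =
      27 * (3 * X ^ 4 + 36 * X ^ 3 + 54 * X ^ 2 + 60 * X + 19) := by
    simp [coeffsP₃, map_ofNat]; ring
  have h₄ : aeval (3 * X : ℚ[X]) (toPoly coeffsP₄) =
      3 ^ 7 * (3 * X ^ 8 - 96 * X ^ 7 - 12 * X ^ 6 + 432 * X ^ 5 + 1498 * X ^ 4 - 320 * X ^ 3 -
        348 * X ^ 2 - 80 * X - 5) := by
    simp [coeffsP₄, map_ofNat]; ring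
  have hscale (a b c d : ℚ[X]) : (9 * a) ^ 2 * (27 * b) * ((27 * c) ^ 4 * (3 ^ 7 * d) ^ 4) =
      3 ^ 47 * (a ^ 2 * b * c ^ 4 * d ^ 4) := by
    ring
  rw [coeffsP, p, ← hscale]
  simp only [toPoly_listMul, toPoly_listPow, map_mul, map_pow, h₁, h₂, h₃, h₄]

lemma aeval_three_mul_X_coeffsR :
    aeval (3 * X : ℚ[X]) (toPoly coeffsR) = C (-3 ^ 36 / 12500) * r := by
  have h₁ : aeval (3 * X : ℚ[X]) (toPoly coeffsR₁) = 9 * (X ^ 2 + 2 * X + 3) := by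
    simp [coeffsR₁, map_ofNat]; ring
  have h₂ : aeval (3 * X : ℚ[X]) (toPoly coeffsR₂) = 3 * (3 * X ^ 2 + 6 * X + 1) := by
    simp [coeffsR₂, map_ofNat]; ring
  have h₃ : aeval (3 * X : ℚ[X]) (toPoly coeffsR₃) =
      27 * (3 * X ^ 4 - 12 * X ^ 3 + 38 * X ^ 2 + 12 * X + 3) := by
    simp [coeffsR₃, map_ofNat]; ring
  have hconst : C (-3 ^ 36 / 12500 : ℚ) * -12500 = 3 ^ 36 := by
    rw [← map_ofNat C 12500, ← C_neg, ← C_mul]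
    norm_num [map_ofNat]
  have hscale (a b c : ℚ[X]) : (9 * a) ^ 2 * ((3 * b) ^ 8 * (27 * c) ^ 8) =
      C (-3 ^ 36 / 12500) * (-12500 * a ^ 2 * b ^ 8 * c ^ 8) := by
    linear_combination -hconst * a ^ 2 * b ^ 8 * c ^ 8
  rw [coeffsR, r, ← hscale]
  simp only [toPoly_listMul, toPoly_listPow, map_mul, map_pow, h₁, h₂, h₃]

variable {K : Type*} [Field K] [Algebra ℚ K]

/-- The polynomial whose roots form the fibre of the degree `56` map `p / q` over `t`. -/
noncomputable def belyiFiber (t : K) : K[X] :=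
  p.map (algebraMap ℚ K) - C t * q.map (algebraMap ℚ K)

/-- The coordinate on the base of the integral model; the constant comes from the leading
coefficient `-12500` of `r` and from clearing the powers of `3` in `x ↦ x / 3`. -/
noncomputable def integralParam (t : K) : K :=
  -12500 * 3 ^ 11 * t / (1 - t)

lemma fiber_comp_three_mul_X (u : K) : (fiber u).comp (C 3 * X) =
    (aeval (3 * X : ℚ[X]) (toPoly coeffsP)).map (algebraMap ℚ K) +
      C u * (aeval (3 * X : ℚ[X]) (toPoly coeffsR)).map (algebraMap ℚ K) := by
  have h (f : ℤ[X]) : (f.map (algebraMap ℤ K)).comp (C 3 * X) =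
      (aeval (3 * X : ℚ[X]) f).map (algebraMap ℚ K) := by
    rw [← coe_mapRingHom (algebraMap ℚ K), map_aeval_int, comp_eq_aeval, aeval_map_algebraMap]
    simp [map_ofNat]
  rw [fiber, add_comp, mul_comp, C_comp, h, h]

lemma belyiFiber_eq {t : K} (ht : t ≠ 1) :
    belyiFiber t = C ((1 - t) / 3 ^ 47) * (fiber (integralParam t)).comp (C 3 * X) := by
  have : CharZero K := algebraRat.charZero K
  have hP : (aeval (3 * X : ℚ[X]) (toPoly coeffsP)).map (algebraMap ℚ K) =
      C (3 ^ 47) * p.map (algebraMap ℚ K) := by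
    simp [aeval_three_mul_X_coeffsP, map_ofNat]
  have hR : (aeval (3 * X : ℚ[X]) (toPoly coeffsR)).map (algebraMap ℚ K) =
      C (-3 ^ 36 / 12500) * r.map (algebraMap ℚ K) := by
    simp [aeval_three_mul_X_coeffsR]
  have hp : (1 - t) / 3 ^ 47 * 3 ^ 47 = 1 - t := by field
  have hr : (1 - t) / 3 ^ 47 * (integralParam t * (-3 ^ 36 / 12500)) = t := by
    rw [integralParam]
    field [sub_ne_zero.mpr ht.symm]
  rw [fiber_comp_three_mul_X, hP, hR, mul_add, ← mul_assoc, ← mul_assoc, ← mul_assoc, ← C_mul,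
    ← C_mul, ← C_mul, mul_assoc _ (integralParam t), hp, hr, belyiFiber, q]
  simp
  ring

variable {t : K}

lemma eq_integralParam_div (ht : t ≠ 1) :
    t = integralParam t / (integralParam t + (-12500 * 3 ^ 11 : ℤ)) := by
  have : CharZero K := algebraRat.charZero K
  have hsub : 1 - t ≠ 0 := sub_ne_zero.mpr ht.symm
  have hadd : integralParam t + (-12500 * 3 ^ 11 : ℤ) = -12500 * 3 ^ 11 / (1 - t) := by
    rw [integralParam]
    push_cast
    field
  rw [hadd, integralParam]
  field

lemma transcendental_integralParam (ht : Transcendental ℤ t) (ht₁ : t ≠ 1) :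
    Transcendental ℤ (integralParam t) := by
  intro hu
  apply ht
  rw [eq_integralParam_div ht₁, div_eq_mul_inv]
  exact hu.mul (hu.add (isAlgebraic_intCast _)).inv

lemma closure_integralParam (ht₁ : t ≠ 1) (hgen : Subfield.closure {t} = ⊤) :
    Subfield.closure {integralParam t} = ⊤ := by
  have hu : integralParam t ∈ Subfield.closure {integralParam t} := Subfield.subset_closure rfl
  rw [eq_top_iff, ← hgen, Subfield.closure_le, Set.singleton_subset_iff]
  have hdiv := div_mem hu (add_mem hu (intCast_mem _ (-12500 * 3 ^ 11)))
  rwa [← eq_integralParam_div ht₁] at hdiv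

lemma natDegree_belyiFiber (ht₁ : t ≠ 1) : (belyiFiber t).natDegree = 56 := by
  have : CharZero K := algebraRat.charZero K
  rw [belyiFiber_eq ht₁, natDegree_C_mul, natDegree_comp, natDegree_fiber, natDegree_C_mul_X]
  · norm_num
  · exact div_ne_zero (sub_ne_zero.mpr ht₁.symm) (by norm_num)

variable (ht : Transcendental ℤ t) (hgen : Subfield.closure {t} = ⊤)
include ht hgen

theorem irreducible_belyiFiber : Irreducible (belyiFiber t) := by
  have : CharZero K := algebraRat.charZero K
  have ht₁ := ne_one_of_transcendental ht
  rw [belyiFiber_eq ht₁]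
  refine irreducible_C_mul_comp_C_mul_X (by norm_num)
    (div_ne_zero (sub_ne_zero.mpr ht₁.symm) (by norm_num)) ?_
  exact irreducible_fiber_of_transcendental (transcendental_integralParam ht ht₁)
    (closure_integralParam ht₁ hgen)

theorem card_gal_belyiFiber : Nat.card (belyiFiber t).Gal = 80640 := by
  have : CharZero K := algebraRat.charZero K
  have ht₁ := ne_one_of_transcendental ht
  refine card_algEquiv_of_transcendental (transcendental_integralParam ht ht₁)
    (closure_integralParam ht₁ hgen) ?_
  exact isSplittingField_of_C_mul_comp_C_mul_X (by norm_num)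
    (div_ne_zero (sub_ne_zero.mpr ht₁.symm) (by norm_num)) (belyiFiber_eq ht₁)

end BelyiMap

end BelyiDeg56

theorem belyi_deg56_stmt14 :
    F.natDegree = 56 ∧ Irreducible F ∧ Nat.card F.Gal = 80640 := by
  have ht := BelyiDeg56.transcendental_int_of_rat (RatFunc.transcendental_X (K := ℚ))
  have hgen := BelyiDeg56.closure_eq_top_of_adjoin_rat (RatFunc.adjoin_X (K := ℚ))
  have hF : F = BelyiDeg56.belyiFiber RatFunc.X := rfl
  rw [hF]
  exact ⟨BelyiDeg56.natDegree_belyiFiber (BelyiDeg56.ne_one_of_transcendental ht),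
    BelyiDeg56.irreducible_belyiFiber ht hgen, BelyiDeg56.card_gal_belyiFiber ht hgen⟩
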